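/- arXiv:1407.6086 — 2 statements merged into one kernel-verified Lean document; each statement's English description precedes it below -/
import Mathlib

section
/- Let 𝒫 be a digital net in G^s with generating matrices C_1,…,C_s, let 𝒫_{Φ_b} be its folded digital net (which is the digital net with generating matrices T C_1,…,T C_s), let 𝒫^⊥ be the dual net of 𝒫 and 𝒫^⊥_{Φ_b} the dual net of 𝒫_{Φ_b}. Then 𝒫^⊥_{Φ_b} = { ⌊k/b⌋ : k ∈ E₀^s ∩ 𝒫^⊥ }, where ⌊k/b⌋ = (⌊k_1/b⌋, …, ⌊k_s/b⌋) componentwise. -/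
namespace QMC

/-- the `i`-th `b`-adic digit of `k`. -/
def digit (b k i : ℕ) : ℕ := k / b ^ i % b

/-- the matrix `T` with `t_{i,1} = b-1`, `t_{i,i+1} = 1` and `t_{i,j} = 0` otherwise
(rows and columns indexed by `ℕ` starting from `0`). -/
def Tmat (b : ℕ) (i j : ℕ) : ZMod b :=
  if j = 0 then ((b - 1 : ℕ) : ZMod b) else if j = i + 1 then 1 else 0

/-- the matrix product `T · C` for a matrix `C` with countably many rows and `m`
columns (the sum over `j` has finite support). -/
noncomputable def TmulC (b : ℕ) {m : ℕ} (C : ℕ → Fin m → ZMod b) : ℕ → Fin m → ZMod b :=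
  fun i c => ∑ᶠ j : ℕ, Tmat b i j * C j c

/-- the dual net `𝒫^⊥ = {k : C₁ᵀ k⃗₁ + ⋯ + C_sᵀ k⃗_s = 0}` of the digital net with
generating matrices `C`. -/
def dualNet (b : ℕ) {s m : ℕ} (C : Fin s → ℕ → Fin m → ZMod b) : Set (Fin s → ℕ) :=
  {k | ∀ c : Fin m, ∑ j, ∑ i ∈ Finset.range (k j + 1),
    C j i c * (digit b (k j) i : ZMod b) = 0}

/-!
Since `(T C) i = C (i + 1) - C 0`, pairing the rows of `T C` with the digits of `⌊k/b⌋` gives the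
pairing of the rows of `C` with the digits of `k`, minus `δ(k)` times the row `C 0`. The correction
vanishes mod `b` whenever `b ∣ δ(k)`, and every `l` is `⌊k/b⌋` for such a `k`: choose the lowest
digit of `k` to be `-δ(l)` mod `b`.
-/

theorem digit_zero (b k : ℕ) : digit b k 0 = k % b := by
  simp [digit]

theorem digit_succ (b k i : ℕ) : digit b k (i + 1) = digit b (k / b) i := by
  rw [digit, digit, pow_succ', Nat.div_div_eq_div_mul]

theorem digit_eq_zero_of_le {b k i : ℕ} (hb : 1 < b) (hki : k ≤ i) : digit b k i = 0 := by
  have hk : k < b ^ i := hki.trans_lt (Nat.lt_pow_self hb)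
  rw [digit, Nat.div_eq_of_lt hk, Nat.zero_mod]

theorem sum_digits_eq_mod_add {b : ℕ} (hb : 1 < b) (k : ℕ) :
    (Nat.digits b k).sum = k % b + (Nat.digits b (k / b)).sum := by
  rcases k.eq_zero_or_pos with rfl | hk
  · simp
  · rw [Nat.digits_def' hb hk, List.sum_cons]

theorem exists_div_eq_and_dvd_sum_digits {b : ℕ} (hb : 1 < b) (l : ℕ) :
    ∃ k, k / b = l ∧ b ∣ (Nat.digits b k).sum := by
  have : NeZero b := ⟨by omega⟩
  let r : ZMod b := -((Nat.digits b l).sum : ZMod b)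
  have hdiv : (b * l + r.val) / b = l := by
    rw [Nat.mul_add_div (by omega), Nat.div_eq_of_lt r.val_lt, add_zero]
  have hmod : (b * l + r.val) % b = r.val := by
    rw [Nat.mul_add_mod, Nat.mod_eq_of_lt r.val_lt]
  refine ⟨b * l + r.val, hdiv, ?_⟩
  rw [← ZMod.natCast_eq_zero_iff, sum_digits_eq_mod_add hb, hdiv, hmod, Nat.cast_add,
    ZMod.natCast_zmod_val, neg_add_cancel]

/-- The pairing `∑ i, g i * κ_i` of a sequence `g` with the `b`-adic digits `κ_i` of `k`; for `g` a
column of a generating matrix `C` it is an entry of `Cᵀ k⃗`. As in `dualNet`, the sum is cut off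
after `i = k`, beyond which all digits vanish when `1 < b`. -/
def digitPairing {R : Type*} [Semiring R] (b : ℕ) (g : ℕ → R) (k : ℕ) : R :=
  ∑ i ∈ Finset.range (k + 1), g i * (digit b k i : R)

section Semiring

variable {R : Type*} [Semiring R] {b : ℕ}

theorem sum_range_mul_digit_eq_digitPairing (hb : 1 < b) (g : ℕ → R) {k N : ℕ} (hkN : k ≤ N) :
    ∑ i ∈ Finset.range N, g i * (digit b k i : R) = digitPairing b g k := by
  have eq_sum_range {n : ℕ} (hn : k ≤ n) : ∑ i ∈ Finset.range n, g i * (digit b k i : R) =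
      ∑ i ∈ Finset.range k, g i * (digit b k i : R) :=
    Finset.eventually_constant_sum
      (fun i hi => by rw [digit_eq_zero_of_le hb hi, Nat.cast_zero, mul_zero]) hn
  rw [digitPairing, eq_sum_range hkN, eq_sum_range k.le_succ]

theorem digitPairing_eq_add_digitPairing_div (hb : 1 < b) (g : ℕ → R) (k : ℕ) :
    digitPairing b g k =
      g 0 * ((k % b : ℕ) : R) + digitPairing b (fun i => g (i + 1)) (k / b) := by
  rw [digitPairing, Finset.sum_range_succ', add_comm, digit_zero]
  simp only [digit_succ]
  rw [sum_range_mul_digit_eq_digitPairing hb (fun i => g (i + 1)) (Nat.div_le_self k b)]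

theorem digitPairing_const (hb : 1 < b) (a : R) (k : ℕ) :
    digitPairing b (fun _ => a) k = a * ((Nat.digits b k).sum : R) := by
  induction k using Nat.strong_induction_on with
  | _ k ih =>
    rcases k.eq_zero_or_pos with rfl | hk
    · simp [digitPairing, digit]
    · rw [digitPairing_eq_add_digitPairing_div hb, ih _ (Nat.div_lt_self hk hb),
        sum_digits_eq_mod_add hb k, Nat.cast_add, mul_add]

end Semiring

section Ring

variable {R : Type*} [Ring R] {b : ℕ}

theorem digitPairing_sub (g h : ℕ → R) (k : ℕ) :
    digitPairing b (fun i => g i - h i) k = digitPairing b g k - digitPairing b h k := by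
  simp only [digitPairing, sub_mul, Finset.sum_sub_distrib]

theorem digitPairing_succ_sub_zero_div (hb : 1 < b) (g : ℕ → R) (k : ℕ) :
    digitPairing b (fun i => g (i + 1) - g 0) (k / b) =
      digitPairing b g k - g 0 * ((Nat.digits b k).sum : R) := by
  rw [digitPairing_sub, digitPairing_const hb, digitPairing_eq_add_digitPairing_div hb g k,
    sum_digits_eq_mod_add hb k, Nat.cast_add, mul_add, add_sub_add_left_eq_sub]

end Ring

section Folding

variable {b s m : ℕ}

theorem TmulC_apply (hb : 0 < b) (C : ℕ → Fin m → ZMod b) (i : ℕ) (c : Fin m) :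
    TmulC b C i c = C (i + 1) c - C 0 c := by
  have hsupport : (Function.support fun j => Tmat b i j * C j c) ⊆ ({0, i + 1} : Finset ℕ) := by
    intro j hj
    contrapose! hj
    simp_all [Tmat]
  have hfirst : Tmat b i 0 = -1 := by
    simp [Tmat, Nat.cast_sub (Nat.one_le_of_lt hb)]
  have hshift : Tmat b i (i + 1) = 1 := by
    simp [Tmat]
  rw [TmulC, finsum_eq_sum_of_support_subset _ hsupport, Finset.sum_pair i.succ_ne_zero.symm,
    hfirst, hshift]
  ring

theorem digitPairing_TmulC_div (hb : 1 < b) (C : ℕ → Fin m → ZMod b) (c : Fin m) {k : ℕ}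
    (hk : b ∣ (Nat.digits b k).sum) :
    digitPairing b (fun i => TmulC b C i c) (k / b) = digitPairing b (fun i => C i c) k := by
  simp only [TmulC_apply (Nat.zero_lt_of_lt hb)]
  rw [digitPairing_succ_sub_zero_div hb (fun i => C i c), (ZMod.natCast_eq_zero_iff _ _).mpr hk,
    mul_zero, sub_zero]

theorem mem_dualNet_iff {C : Fin s → ℕ → Fin m → ZMod b} {k : Fin s → ℕ} :
    k ∈ dualNet b C ↔ ∀ c, ∑ j, digitPairing b (fun i => C j i c) (k j) = 0 :=
  Iff.rfl

theorem div_mem_dualNet_TmulC_iff (hb : 1 < b) (C : Fin s → ℕ → Fin m → ZMod b) {k : Fin s → ℕ}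
    (hk : ∀ j, b ∣ (Nat.digits b (k j)).sum) :
    (fun j => k j / b) ∈ dualNet b (fun j => TmulC b (C j)) ↔ k ∈ dualNet b C := by
  simp only [mem_dualNet_iff, digitPairing_TmulC_div hb _ _ (hk _)]

end Folding

/-- The dual net of the folded digital net (the net generated by `T C₁, …, T C_s`) is
`{⌊k/b⌋ : k ∈ E₀^s ∩ 𝒫^⊥}`, where `E₀` is the set of `k ∈ ℕ₀` whose `b`-adic digit sum
is divisible by `b`. -/
theorem dual_folded_net (b s m : ℕ) (hb : 2 ≤ b) (hs : 0 < s) (hm : 0 < m)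
    (C : Fin s → ℕ → Fin m → ZMod b) :
    dualNet b (fun j => TmulC b (C j)) =
      (fun (k : Fin s → ℕ) (j : Fin s) => k j / b) ''
        {k | (∀ j, (b : ℕ) ∣ (Nat.digits b (k j)).sum) ∧ k ∈ dualNet b C} := by
  ext l
  constructor
  · intro hl
    choose k hdiv hdvd using fun j => exists_div_eq_and_dvd_sum_digits hb (l j)
    obtain rfl : (fun j => k j / b) = l := funext hdiv
    exact ⟨k, ⟨hdvd, (div_mem_dualNet_TmulC_iff hb C hdvd).mp hl⟩, rfl⟩
  · rintro ⟨k, ⟨hdvd, hk⟩, rfl⟩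
    exact (div_mem_dualNet_TmulC_iff hb C hdvd).mpr hk

end QMC
end

section
/- Let b be prime, α ≥ 2 an integer, m a positive integer, and n a positive integer with n ≥ αm/2. Let p ∈ 𝔽_b[x] be irreducible with deg(p) = n, γ_1,…,γ_s ≥ 0 weights and D > 0 a constant, and let q = (q_1,…,q_s) ∈ R_{b,n}^s be obtained by the component-by-component algorithm (each q_τ minimizing q̃ ↦ B_α((q_1,…,q_{τ−1}, q̃), p) over R_{b,n}). Then for every real λ with 1/α < λ ≤ 1, B_α(q, p) ≤ b^{−m/λ} [ −1 + ∏_{j=1}^{s} (1 + γ_j^{λ/2} D^{λ/2} A_{α,b,λ}) ]^{1/λ}, where A_{α,b,λ} = A₁ + A₂ with A₁ = (b/(b−1)) [ Σ_{v=1}^{α−1} ∏_{i=1}^{v} (b−1)/(b^{λi}−1) + ((b^{λα}−1)/(b^{λα}−b)) ∏_{i=1}^{α} (b−1)/(b^{λi}−1) ] and A₂ = (1/(b−1)) Σ_{v=2}^{α−1} ∏_{i=1}^{v} (b^{λ}(b−1))/(b^{λi}−1) + (b^{λ}/(b^{λα}−b)) ∏_{i=1}^{α−1} (b^{λ}(b−1))/(b^{λi}−1).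 -/
namespace QMC

/-- `μ_α(k) = a₁ + ⋯ + a_{min(v,α)}`, the sum of the `α` largest positions (counted
from `1`) of nonzero `b`-adic digits of `k`; `μ_α(0) = 0`. -/
def mualpha (b α k : ℕ) : ℕ :=
  (((((Finset.range (k + 1)).filter fun i => digit b k i ≠ 0).sort (· ≤ ·)).reverse.take
    α).map (· + 1)).sum

/-- the set `E` of positive integers whose `b`-adic digit sum is divisible by `b`. -/
def Eset (b : ℕ) : Set ℕ := {k | k ≠ 0 ∧ (b : ℕ) ∣ (Nat.digits b k).sum}

/-- the truncated polynomial `tr_n(k)(x) = κ₀ + κ₁ x + ⋯ + κ_{n-1} x^{n-1}`. -/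
noncomputable def trunc (b n k : ℕ) : Polynomial (ZMod b) :=
  ∑ i ∈ Finset.range n, Polynomial.C ((digit b k i : ℕ) : ZMod b) * Polynomial.X ^ i

/-- the quality criterion `B_α((q_1,…,q_τ), p)` (a bound on the squared worst-case
error of the folded higher order polynomial lattice rule). -/
noncomputable def Bcrit (b α m n : ℕ) [Fact b.Prime] (γ : ℕ → ℝ) (D : ℝ)
    (p : Polynomial (ZMod b)) (τ : ℕ) (q : ℕ → Polynomial (ZMod b)) : ℝ :=
  ∑ u ∈ (Finset.range τ).powerset.filter (fun u => u.Nonempty),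
    Real.sqrt (∏ j ∈ u, γ j) * Real.sqrt D ^ u.card *
      ∑' f : {f : ℕ → ℕ // (∀ j ∈ u, f j ∈ Eset b) ∧ (∀ j ∉ u, f j = 0) ∧
          ((∑ j ∈ Finset.range τ, trunc b n (f j) * q j) % p).degree <
            ((n - m : ℕ) : WithBot ℕ)},
        ((b : ℝ) ^ ∑ j ∈ u, mualpha b α (f.1 j / b))⁻¹

/-- the constant `A_{α,b,λ,1}`. -/
noncomputable def A1 (b α : ℕ) (lam : ℝ) : ℝ :=
  ((b : ℝ) / ((b : ℝ) - 1)) *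
    (∑ v ∈ Finset.Icc 1 (α - 1), ∏ i ∈ Finset.Icc 1 v,
        ((b : ℝ) - 1) / ((b : ℝ) ^ (lam * i) - 1) +
      (((b : ℝ) ^ (lam * α) - 1) / ((b : ℝ) ^ (lam * α) - b)) *
        ∏ i ∈ Finset.Icc 1 α, ((b : ℝ) - 1) / ((b : ℝ) ^ (lam * i) - 1))

/-- the constant `A_{α,b,λ,2}`. -/
noncomputable def A2 (b α : ℕ) (lam : ℝ) : ℝ :=
  (1 / ((b : ℝ) - 1)) * ∑ v ∈ Finset.Icc 2 (α - 1), ∏ i ∈ Finset.Icc 1 v,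
      ((b : ℝ) ^ lam * ((b : ℝ) - 1)) / ((b : ℝ) ^ (lam * i) - 1) +
    ((b : ℝ) ^ lam / ((b : ℝ) ^ (lam * α) - b)) *
      ∏ i ∈ Finset.Icc 1 (α - 1), ((b : ℝ) ^ lam * ((b : ℝ) - 1)) / ((b : ℝ) ^ (lam * i) - 1)

/-!
Write `X_τ` for the criterion of the first `τ` components; `1 + X_τ` is a sum of products of
one-coordinate weights over the dual lattice. Raising to the power `λ ≤ 1` is subadditive, so `λ`
may be moved inside all sums. In the step from `τ` to `τ + 1` the new index `k` is of one of two
kinds.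

* If `b ^ n ∣ k`, the truncated polynomial of `k` is zero, whatever the new generator is. Such a
  `k ∈ E` has at least two nonzero digits, all shifted by at least `n` places, so `μ_α` grows by
  at least `2 n ≥ α m`; this costs `b ^ (-m)` times `A₂` after raising to the power `λ > 1 / α`.
* Otherwise the residue of `r + tr_n(k) q'` modulo the irreducible `p` determines `q'`, so the dual
  condition holds for at most `b ^ (n - m)` of the `b ^ n` candidates `q'`. The best `q'` is no
  worse than the average, which gives `b ^ (-m)` times `A₁`.

Hence `X_{τ+1} ^ λ ≤ X_τ ^ λ + b ^ (-m) c_τ ^ λ (A₁ + A₂) ∏_{j < τ} (1 + c_j ^ λ A₁)` with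
`c_j = γ_j^{1/2} D^{1/2}`, and the claim follows by induction. The constants `A₁` and `A₂` bound
sums of `b ^ (-λ μ_α(k))`, evaluated digit by digit from the lowest digit upwards.
-/

section Digits

/-- The positions (counted from `0`) of the nonzero `b`-adic digits of `k` in decreasing order;
`mualpha b α k` adds up its first `α` entries, each increased by one. -/
def digitPositions (b k : ℕ) : List ℕ :=
  (((Finset.range (k + 1)).filter fun i => digit b k i ≠ 0).sort (· ≤ ·)).reverse

/-- The number of nonzero `b`-adic digits of `k`, capped at `α`. -/
def cappedWeight (b α k : ℕ) : ℕ := ((digitPositions b k).take α).length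

lemma mualpha_eq_sum_take (b α k : ℕ) :
    mualpha b α k = (((digitPositions b k).take α).map (· + 1)).sum := rfl

lemma cappedWeight_le (b α k : ℕ) : cappedWeight b α k ≤ α := List.length_take_le _ _

lemma sortedGT_digitPositions (b k : ℕ) : (digitPositions b k).SortedGT :=
  (Finset.sortedLT_sort _).reverse

variable {b α : ℕ}

lemma digit_mul_add_zero {c : ℕ} (hc : c < b) (k : ℕ) : digit b (b * k + c) 0 = c := by
  simp [digit, Nat.mod_eq_of_lt hc]

lemma digit_mul_add_succ {c : ℕ} (hc : c < b) (k i : ℕ) :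
    digit b (b * k + c) (i + 1) = digit b k i := by
  have hdiv : (b * k + c) / b = k := by
    rw [Nat.mul_add_div (by lia), Nat.div_eq_of_lt hc, add_zero]
  rw [digit, pow_succ', ← Nat.div_div_eq_div_mul, hdiv, digit]

lemma mem_digitPositions (hb : 1 < b) {k i : ℕ} :
    i ∈ digitPositions b k ↔ digit b k i ≠ 0 := by
  simp only [digitPositions, List.mem_reverse, Finset.mem_sort, Finset.mem_filter,
    Finset.mem_range, and_iff_right_iff_imp]
  contrapose!
  intro hik
  have hlt : k < b ^ i := lt_of_lt_of_le (by lia) (Nat.lt_pow_self hb).le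
  simp [digit, Nat.div_eq_of_lt hlt]

lemma digitPositions_mul_add (hb : 1 < b) {c : ℕ} (hc : c < b) (k : ℕ) :
    digitPositions b (b * k + c) =
      (digitPositions b k).map (· + 1) ++ if c = 0 then [] else [0] := by
  apply (sortedGT_digitPositions _ _).eq_of_mem_iff
  · have hshift : ((digitPositions b k).map (· + 1)).Pairwise (· > ·) := by
      rw [List.pairwise_map]
      exact (sortedGT_digitPositions b k).pairwise.imp (by lia)
    apply List.Pairwise.sortedGT
    split_ifs
    · simpa using hshift
    · simpa [List.pairwise_append] using hshift
  · rintro (_ | i)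
    · rw [mem_digitPositions hb, digit_mul_add_zero hc]
      split_ifs with hc0 <;> simp [hc0]
    · rw [mem_digitPositions hb, digit_mul_add_succ hc]
      split_ifs <;> simp [mem_digitPositions hb]

lemma cappedWeight_mul_add (hb : 1 < b) {c : ℕ} (hc : c < b) (k : ℕ) :
    cappedWeight b α (b * k + c) = min (cappedWeight b α k + if c = 0 then 0 else 1) α := by
  rw [cappedWeight, cappedWeight, digitPositions_mul_add hb hc]
  split_ifs
  · simp
  · simp only [List.length_take, List.length_append, List.length_map, List.length_singleton]
    lia

lemma cappedWeight_mul (hb : 1 < b) (k : ℕ) : cappedWeight b α (b * k) = cappedWeight b α k := by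
  simpa [cappedWeight_le] using cappedWeight_mul_add (α := α) hb (c := 0) (by lia) k

lemma mualpha_mul_add (hb : 1 < b) {c : ℕ} (hc : c < b) (k : ℕ) :
    mualpha b α (b * k + c) = mualpha b α k + cappedWeight b α (b * k + c) := by
  have hshift : ∀ L : List ℕ, (L.map (· + 1)).sum = L.sum + L.length := by simp [List.sum_map_add]
  have hlast : ∀ r, (List.take r (if c = 0 then [] else [0])).sum = 0 := by
    rintro (_ | r) <;> split_ifs <;> simp
  rw [mualpha_eq_sum_take, hshift, mualpha_eq_sum_take, cappedWeight, add_left_inj,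
    digitPositions_mul_add hb hc, List.take_append, ← List.map_take, List.sum_append, hlast,
    add_zero]

lemma mualpha_mul_pow (hb : 1 < b) (k r : ℕ) :
    mualpha b α (b ^ r * k) = mualpha b α k + r * cappedWeight b α k := by
  have hweight : ∀ r, cappedWeight b α (b ^ r * k) = cappedWeight b α k := by
    intro r
    induction r with
    | zero => simp
    | succ r ih => rw [pow_succ', mul_assoc, cappedWeight_mul hb, ih]
  induction r with
  | zero => simp
  | succ r ih =>
    have hstep := mualpha_mul_add (α := α) hb (c := 0) (by lia) (b ^ r * k)
    rw [add_zero, ← mul_assoc, ← pow_succ'] at hstep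
    rw [hstep, hweight, ih]
    ring

lemma cappedWeight_eq_zero_iff (hb : 1 < b) (hα : 0 < α) {k : ℕ} :
    cappedWeight b α k = 0 ↔ k = 0 := by
  refine ⟨fun h => ?_, ?_⟩
  · by_contra hk
    have hempty : digitPositions b k = [] := by
      simpa [cappedWeight, hα.ne'] using h
    have hlead : digit b k (Nat.log b k) ≠ 0 := by
      have hlt : k / b ^ Nat.log b k < b := by
        rw [Nat.div_lt_iff_lt_mul (by positivity), ← pow_succ']
        exact Nat.lt_pow_succ_log_self hb k
      rw [digit, Nat.mod_eq_of_lt hlt]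
      exact (Nat.div_pos (Nat.pow_log_le_self b hk) (by positivity)).ne'
    simpa [hempty] using (mem_digitPositions hb).2 hlead
  · rintro rfl
    simp [cappedWeight, digitPositions, digit]

lemma sum_digits_mul_add (hb : 1 < b) {c : ℕ} (hc : c < b) (k : ℕ) :
    (Nat.digits b (b * k + c)).sum = c + (Nat.digits b k).sum := by
  by_cases h : c ≠ 0 ∨ k ≠ 0
  · rw [add_comm, Nat.digits_add b hb c k hc h, List.sum_cons]
  · push Not at h
    simp [h]

lemma mul_mem_Eset_iff (hb : 1 < b) {k : ℕ} : b * k ∈ Eset b ↔ k ∈ Eset b := by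
  have hsum := sum_digits_mul_add hb (c := 0) (by lia) k
  rw [add_zero, zero_add] at hsum
  simp [Eset, hsum, show b ≠ 0 by lia]

lemma pow_mul_mem_Eset_iff (hb : 1 < b) {k : ℕ} (r : ℕ) : b ^ r * k ∈ Eset b ↔ k ∈ Eset b := by
  induction r with
  | zero => simp
  | succ r ih => rw [pow_succ', mul_assoc, mul_mem_Eset_iff hb, ih]

lemma eq_of_mul_add_mem_Eset (hb : 1 < b) {k c c' : ℕ} (hc : c < b) (hc' : c' < b)
    (h : b * k + c ∈ Eset b) (h' : b * k + c' ∈ Eset b) : c = c' := by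
  have hdvd := h.2
  have hdvd' := h'.2
  rw [sum_digits_mul_add hb hc] at hdvd
  rw [sum_digits_mul_add hb hc'] at hdvd'
  have hmod : c + (Nat.digits b k).sum ≡ c' + (Nat.digits b k).sum [MOD b] :=
    (Nat.modEq_zero_iff_dvd.2 hdvd).trans (Nat.modEq_zero_iff_dvd.2 hdvd').symm
  exact (Nat.ModEq.add_right_cancel' _ hmod).eq_of_lt_of_lt hc hc'

lemma injOn_div_Eset (hb : 1 < b) : Set.InjOn (· / b) (Eset b) := by
  intro k hk l hl (hkl : k / b = l / b)
  rw [← Nat.div_add_mod k b] at hk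
  rw [← Nat.div_add_mod l b, ← hkl] at hl
  have hmod := eq_of_mul_add_mem_Eset hb (Nat.mod_lt _ (by lia)) (Nat.mod_lt _ (by lia)) hk hl
  rw [← Nat.div_add_mod k b, hmod, hkl, Nat.div_add_mod]

lemma div_ne_zero_of_mem_Eset (hb : 1 < b) {k : ℕ} (hk : k ∈ Eset b) : k / b ≠ 0 := by
  intro hdiv
  have hlt : k < b := (Nat.div_eq_zero_iff_lt (by lia)).1 hdiv
  have hdvd : b ∣ k := by simpa [Nat.digits_of_lt b k hk.1 hlt] using hk.2
  exact hk.1 (Nat.eq_zero_of_dvd_of_lt hdvd hlt)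

lemma two_le_cappedWeight_of_mem_Eset (hb : 1 < b) (hα : 2 ≤ α) {k : ℕ} (hk : k ∈ Eset b) :
    2 ≤ cappedWeight b α k := by
  induction k using Nat.strong_induction_on with
  | _ k ih =>
    have hrec := cappedWeight_mul_add (α := α) hb (Nat.mod_lt k (by lia)) (k / b)
    have hdiv := Nat.div_add_mod k b
    rw [hdiv] at hrec
    by_cases hmod : k % b = 0
    · have hpos : 0 < k := Nat.pos_of_ne_zero hk.1
      rw [hmod, add_zero] at hdiv
      rw [← hdiv, mul_mem_Eset_iff hb] at hk
      have := ih _ (Nat.div_lt_self hpos hb) hk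
      simp only [hmod, if_true] at hrec
      lia
    · have := (cappedWeight_eq_zero_iff (α := α) hb (by lia)).not.2 (div_ne_zero_of_mem_Eset hb hk)
      simp only [hmod, if_false] at hrec
      lia

end Digits

section ClassSums

lemma sum_range_mul {M : Type*} [AddCommMonoid M] (b N : ℕ) (f : ℕ → M) :
    ∑ k ∈ Finset.range (b * N), f k =
      ∑ k ∈ Finset.range N, ∑ c ∈ Finset.range b, f (b * k + c) := by
  induction N with
  | zero => simp
  | succ N ih => rw [Nat.mul_succ, Finset.sum_range_add, ih, Finset.sum_range_succ]

/-- The class of numbers with capped weight `v`: exactly `v` nonzero `b`-adic digits if `v < α`,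
and at least `α` of them if `v = α`. -/
def weightClass (b α v : ℕ) : Set ℕ := {k | cappedWeight b α k = v}

/-- The number of elements of `T` obtained by appending a `b`-adic digit to `k`. -/
noncomputable def extensionCount (b : ℕ) (T : Set ℕ) (k : ℕ) : ℝ :=
  ∑ c ∈ Finset.range b, T.indicator 1 (b * k + c)

/-- The sum of `x ^ μ_α(k)` over the `k ∈ T` with at most `N` digits in base `b`. -/
noncomputable def muSum (b α : ℕ) (x : ℝ) (T : Set ℕ) (N : ℕ) : ℝ :=
  ∑ k ∈ Finset.range (b ^ N), T.indicator 1 k * x ^ mualpha b α k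

variable {b α : ℕ} {x : ℝ} {S T : Set ℕ}

lemma indicator_union_le_add (S T : Set ℕ) (k : ℕ) :
    (S ∪ T).indicator (1 : ℕ → ℝ) k ≤ S.indicator 1 k + T.indicator 1 k := by
  by_cases hS : k ∈ S <;> by_cases hT : k ∈ T <;> simp [hS, hT]

lemma muSum_zero_eq_zero (h0 : 0 ∉ T) : muSum b α x T 0 = 0 := by
  simp [muSum, h0]

lemma muSum_mono (hx : 0 ≤ x) (hST : S ⊆ T) (N : ℕ) : muSum b α x S N ≤ muSum b α x T N := by
  unfold muSum
  gcongr
  exact zero_le_one (α := ℝ)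

lemma muSum_union_le (hx : 0 ≤ x) (S T : Set ℕ) (N : ℕ) :
    muSum b α x (S ∪ T) N ≤ muSum b α x S N + muSum b α x T N := by
  simp only [muSum, ← Finset.sum_add_distrib, ← add_mul]
  gcongr
  exact indicator_union_le_add S T _

lemma muSum_succ (hb : 1 < b) {v : ℕ} (hT : T ⊆ weightClass b α v) (N : ℕ) :
    muSum b α x T (N + 1) =
      x ^ v * ∑ k ∈ Finset.range (b ^ N), extensionCount b T k * x ^ mualpha b α k := by
  rw [muSum, pow_succ', sum_range_mul, Finset.mul_sum]
  refine Finset.sum_congr rfl fun k _ => ?_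
  rw [extensionCount, Finset.sum_mul, Finset.mul_sum]
  refine Finset.sum_congr rfl fun c hc => ?_
  by_cases hmem : b * k + c ∈ T
  · have hweight : cappedWeight b α (b * k + c) = v := hT hmem
    rw [mualpha_mul_add hb (Finset.mem_range.1 hc), hweight, pow_add]
    ring
  · simp [hmem]

/-- The recursion on the number of digits bounds the sum over `T` by any `C` that majorizes the
corresponding fixed-point equation. -/
lemma muSum_le_of_extensionCount_le (hb : 1 < b) (hx : 0 ≤ x) {v : ℕ} {m m' C C' : ℝ}
    (hm : 0 ≤ m) (hm' : 0 ≤ m') (hT : T ⊆ weightClass b α v) (h0 : 0 ∉ T)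
    (hcount : ∀ k, extensionCount b T k ≤ m * T.indicator 1 k + m' * S.indicator 1 k)
    (hS : ∀ N, muSum b α x S N ≤ C') (hC : 0 ≤ C) (hfix : x ^ v * (m * C + m' * C') ≤ C)
    (N : ℕ) : muSum b α x T N ≤ C := by
  induction N with
  | zero => rwa [muSum_zero_eq_zero h0]
  | succ N ih =>
    calc muSum b α x T (N + 1)
        ≤ x ^ v * ∑ k ∈ Finset.range (b ^ N),
            (m * T.indicator 1 k + m' * S.indicator 1 k) * x ^ mualpha b α k := by
          rw [muSum_succ hb hT]
          gcongr
          exact hcount _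
      _ = x ^ v * (m * muSum b α x T N + m' * muSum b α x S N) := by
          simp only [muSum, Finset.mul_sum, ← Finset.sum_add_distrib]
          exact Finset.sum_congr rfl fun k _ => by ring
      _ ≤ x ^ v * (m * C + m' * C') := by
          gcongr
          exact hS N
      _ ≤ C := hfix

lemma zero_notMem_weightClass {v : ℕ} (hb : 1 < b) (hα : 0 < α) (hv : v ≠ 0) :
    0 ∉ weightClass b α v := by
  have hzero := (cappedWeight_eq_zero_iff (k := 0) hb hα).2 rfl
  simp [weightClass, hzero, hv.symm]

lemma extensionCount_weightClass (hb : 1 < b) (v k : ℕ) :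
    extensionCount b (weightClass b α v) k =
      (if cappedWeight b α k = v then 1 else 0) +
        (b - 1) * if min (cappedWeight b α k + 1) α = v then 1 else 0 := by
  obtain ⟨d, rfl⟩ : ∃ d, b = d + 1 := ⟨b - 1, by lia⟩
  have hmem : ∀ c < d + 1, (weightClass (d + 1) α v).indicator (1 : ℕ → ℝ) ((d + 1) * k + c) =
      if min (cappedWeight (d + 1) α k + if c = 0 then 0 else 1) α = v then 1 else 0 := by
    intro c hc
    simp only [weightClass, Set.indicator_apply, Set.mem_ofPred_eq, cappedWeight_mul_add hb hc,
      Pi.one_apply]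
  rw [extensionCount, Finset.sum_congr rfl fun c hc => hmem c (Finset.mem_range.1 hc),
    Finset.sum_range_succ', add_comm]
  simp [cappedWeight_le]

lemma extensionCount_weightClass_succ (hb : 1 < b) {v : ℕ} (hv : v + 1 < α) (k : ℕ) :
    extensionCount b (weightClass b α (v + 1)) k =
      1 * (weightClass b α (v + 1)).indicator 1 k +
        (b - 1) * (weightClass b α v).indicator 1 k := by
  have hiff : min (cappedWeight b α k + 1) α = v + 1 ↔ cappedWeight b α k = v := by lia
  rw [extensionCount_weightClass hb]
  simp only [hiff, weightClass, Set.indicator_apply, Set.mem_ofPred_eq, Pi.one_apply, one_mul]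

lemma extensionCount_weightClass_top (hb : 1 < b) (a k : ℕ) :
    extensionCount b (weightClass b (a + 1) (a + 1)) k =
      b * (weightClass b (a + 1) (a + 1)).indicator 1 k +
        (b - 1) * (weightClass b (a + 1) a).indicator 1 k := by
  have hle := cappedWeight_le b (a + 1) k
  rw [extensionCount_weightClass hb]
  simp only [weightClass, Set.indicator_apply, Set.mem_ofPred_eq, Pi.one_apply]
  grind

/-- An element of `Eset b` is determined by all its digits but the last. -/
lemma extensionCount_le_indicator (hb : 1 < b) (hT : T ⊆ Eset b) {k : ℕ}
    (hS : ∀ c < b, b * k + c ∈ T → k ∈ S) : extensionCount b T k ≤ S.indicator 1 k := by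
  by_cases hex : ∃ c < b, b * k + c ∈ T
  · obtain ⟨c, hc, hcT⟩ := hex
    rw [extensionCount, Finset.sum_eq_single_of_mem c (Finset.mem_range.2 hc)]
    · simp [hcT, hS c hc hcT]
    · intro c' hc' hne
      refine Set.indicator_of_notMem (fun hc'T => hne ?_) _
      exact eq_of_mul_add_mem_Eset hb (Finset.mem_range.1 hc') hc (hT hc'T) (hT hcT)
  · push Not at hex
    rw [extensionCount, Finset.sum_eq_zero fun c hc =>
      Set.indicator_of_notMem (hex c (Finset.mem_range.1 hc)) _]
    exact Set.indicator_nonneg (fun _ _ => zero_le_one) _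

lemma extensionCount_Eset_inter_succ_le (hb : 1 < b) {v : ℕ} (hv : v + 1 < α) (k : ℕ) :
    extensionCount b (Eset b ∩ weightClass b α (v + 1)) k ≤
      1 * (Eset b ∩ weightClass b α (v + 1)).indicator 1 k +
        1 * (weightClass b α v).indicator 1 k := by
  rw [one_mul, one_mul]
  refine le_trans ?_ (indicator_union_le_add _ _ k)
  refine extensionCount_le_indicator hb Set.inter_subset_left fun c hc hmem => ?_
  obtain ⟨hE, hw : cappedWeight b α (b * k + c) = v + 1⟩ := hmem
  rcases eq_or_ne c 0 with rfl | hc0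
  · left
    rw [add_zero] at hE hw
    exact ⟨(mul_mem_Eset_iff hb).1 hE, (cappedWeight_mul hb k).symm.trans hw⟩
  · right
    rw [cappedWeight_mul_add hb hc, if_neg hc0] at hw
    change cappedWeight b α k = v
    lia

lemma extensionCount_Eset_inter_top_le (hb : 1 < b) (a k : ℕ) :
    extensionCount b (Eset b ∩ weightClass b (a + 1) (a + 1)) k ≤
      (weightClass b (a + 1) (a + 1) ∪ weightClass b (a + 1) a).indicator 1 k := by
  refine extensionCount_le_indicator hb Set.inter_subset_left fun c hc hmem => ?_
  obtain ⟨-, hw : cappedWeight b (a + 1) (b * k + c) = a + 1⟩ := hmem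
  have hle := cappedWeight_le b (a + 1) k
  rw [cappedWeight_mul_add hb hc] at hw
  change cappedWeight b (a + 1) k = a + 1 ∨ cappedWeight b (a + 1) k = a
  grind

/-- The value of the fixed-point recursion for `∑ y ^ (-μ_α(k))` over the numbers with exactly `v`
nonzero digits. -/
noncomputable def weightProd (b : ℕ) (y : ℝ) (v : ℕ) : ℝ :=
  ∏ i ∈ Finset.Icc 1 v, ((b : ℝ) - 1) / (y ^ i - 1)

/-- The value of the fixed-point recursion for `∑ y ^ (-μ_α(k))` over the numbers with at least `α`
nonzero digits. -/
noncomputable def topWeightProd (b α : ℕ) (y : ℝ) : ℝ :=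
  weightProd b y (α - 1) * ((b - 1) / (y ^ α - b))

variable {y : ℝ}

lemma weightProd_succ (b : ℕ) (y : ℝ) (v : ℕ) :
    weightProd b y (v + 1) = weightProd b y v * ((b - 1) / (y ^ (v + 1) - 1)) :=
  Finset.prod_Icc_succ_top (by lia) _

lemma weightProd_nonneg (hb : 1 < b) (hy : 1 < y) (v : ℕ) : 0 ≤ weightProd b y v := by
  refine Finset.prod_nonneg fun i _ => div_nonneg ?_ ?_
  · exact sub_nonneg.2 (mod_cast hb.le)
  · exact sub_nonneg.2 (one_le_pow₀ hy.le)

lemma topWeightProd_nonneg (hb : 1 < b) (hy : 1 < y) (hyα : b < y ^ α) :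
    0 ≤ topWeightProd b α y := by
  refine mul_nonneg (weightProd_nonneg hb hy _) (div_nonneg ?_ (sub_nonneg.2 hyα.le))
  exact sub_nonneg.2 (mod_cast hb.le)

lemma muSum_weightClass_le (hb : 1 < b) (hy : 1 < y) {v : ℕ} (hv : v < α) (N : ℕ) :
    muSum b α y⁻¹ (weightClass b α v) N ≤ weightProd b y v := by
  have hb1 : (0 : ℝ) ≤ b - 1 := sub_nonneg.2 (mod_cast hb.le)
  induction v generalizing N with
  | zero =>
    have hclass : weightClass b α 0 = {0} := Set.ext fun k => cappedWeight_eq_zero_iff hb hv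
    have hmu : mualpha b α 0 = 0 := by simp [mualpha, digit]
    have hmem : 0 ∈ Finset.range (b ^ N) := Finset.mem_range.2 (by positivity)
    rw [muSum, hclass, Finset.sum_eq_single_of_mem 0 hmem fun k _ hk => by simp [hk]]
    simp [hmu, weightProd]
  | succ v ih =>
    refine muSum_le_of_extensionCount_le hb (by positivity) zero_le_one hb1 subset_rfl
      (zero_notMem_weightClass hb (by lia) (by lia))
      (fun k => (extensionCount_weightClass_succ hb hv k).le) (ih (by lia))
      (weightProd_nonneg hb hy _) (le_of_eq ?_) N
    have hpow : 1 < y ^ (v + 1) := one_lt_pow₀ hy (by lia)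
    have hne : y ^ (v + 1) - 1 ≠ 0 := by linarith
    have hne' : y ^ (v + 1) ≠ 0 := by linarith
    rw [weightProd_succ, inv_pow]
    field_simp
    ring

lemma muSum_weightClass_top_le (hb : 1 < b) (hα : 0 < α) (hy : 1 < y) (hyα : b < y ^ α)
    (N : ℕ) : muSum b α y⁻¹ (weightClass b α α) N ≤ topWeightProd b α y := by
  have hb1 : (0 : ℝ) ≤ b - 1 := sub_nonneg.2 (mod_cast hb.le)
  obtain ⟨a, rfl⟩ : ∃ a, α = a + 1 := ⟨α - 1, by lia⟩
  refine muSum_le_of_extensionCount_le hb (by positivity) b.cast_nonneg hb1 subset_rfl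
    (zero_notMem_weightClass hb (by lia) (by lia))
    (fun k => (extensionCount_weightClass_top hb a k).le)
    (muSum_weightClass_le hb hy (by lia)) (topWeightProd_nonneg hb hy hyα) (le_of_eq ?_) N
  have hne : y ^ (a + 1) - b ≠ 0 := by linarith
  have hne' : y ^ (a + 1) ≠ 0 := by positivity
  rw [topWeightProd, inv_pow, Nat.add_sub_cancel]
  field_simp
  ring

lemma muSum_Eset_inter_weightClass_le (hb : 1 < b) (hy : 1 < y) {v : ℕ} (hv0 : v ≠ 0)
    (hv : v < α) (N : ℕ) :
    muSum b α y⁻¹ (Eset b ∩ weightClass b α v) N ≤ weightProd b y v / (b - 1) := by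
  have hb1 : (0 : ℝ) < b - 1 := sub_pos.2 (mod_cast hb)
  obtain ⟨v, rfl⟩ := Nat.exists_eq_succ_of_ne_zero hv0
  refine muSum_le_of_extensionCount_le hb (by positivity) zero_le_one zero_le_one
    Set.inter_subset_right (fun h => h.1.1 rfl) (extensionCount_Eset_inter_succ_le hb hv)
    (muSum_weightClass_le hb hy (by lia)) (div_nonneg (weightProd_nonneg hb hy _) hb1.le)
    (le_of_eq ?_) N
  have hpow : 1 < y ^ (v + 1) := one_lt_pow₀ hy (by lia)
  have hne : y ^ (v + 1) - 1 ≠ 0 := by linarith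
  have hne' : y ^ (v + 1) ≠ 0 := by linarith
  rw [weightProd_succ, inv_pow]
  field_simp
  ring

lemma muSum_Eset_inter_weightClass_top_le (hb : 1 < b) (hα : 0 < α) (hy : 1 < y)
    (hyα : b < y ^ α) (N : ℕ) :
    muSum b α y⁻¹ (Eset b ∩ weightClass b α α) N ≤ weightProd b y (α - 1) / (y ^ α - b) := by
  have hdenom : 0 < y ^ α - b := sub_pos.2 hyα
  have hprod := weightProd_nonneg hb hy (α - 1)
  obtain ⟨a, rfl⟩ : ∃ a, α = a + 1 := ⟨α - 1, by lia⟩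
  have hunion : ∀ N, muSum b (a + 1) y⁻¹ (weightClass b (a + 1) (a + 1) ∪ weightClass b (a + 1) a) N
      ≤ topWeightProd b (a + 1) y + weightProd b y a := fun N =>
    (muSum_union_le (by positivity) _ _ N).trans <| add_le_add
      (muSum_weightClass_top_le hb hα hy hyα N) (muSum_weightClass_le hb hy (by lia) N)
  refine muSum_le_of_extensionCount_le (m := 0) (m' := 1) hb (by positivity) le_rfl zero_le_one
    Set.inter_subset_right (fun h => h.1.1 rfl)
    (fun k => by simpa using extensionCount_Eset_inter_top_le hb a k) hunion (by positivity) ?_ N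
  calc y⁻¹ ^ (a + 1) * (0 * (weightProd b y a / (y ^ (a + 1) - b)) +
        1 * (topWeightProd b (a + 1) y + weightProd b y a))
      = weightProd b y a / (y ^ (a + 1) - b) * ((y ^ (a + 1) - 1) / y ^ (a + 1)) := by
        have hne' : y ^ (a + 1) ≠ 0 := by positivity
        rw [topWeightProd, inv_pow, Nat.add_sub_cancel]
        field_simp
        ring
    _ ≤ weightProd b y a / (y ^ (a + 1) - b) := by
        refine mul_le_of_le_one_right (div_nonneg hprod hdenom.le) ?_
        rw [div_le_one (by positivity)]
        linarith

lemma sum_eq_sum_mul_muSum {l : ℕ} (hT : ∀ k ∈ T, l ≤ cappedWeight b α k) (g : ℕ → ℝ) (N : ℕ) :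
    ∑ k ∈ Finset.range (b ^ N), T.indicator 1 k * (g (cappedWeight b α k) * x ^ mualpha b α k) =
      ∑ v ∈ Finset.Icc l α, g v * muSum b α x (T ∩ weightClass b α v) N := by
  simp only [muSum, Finset.mul_sum]
  rw [Finset.sum_comm]
  refine Finset.sum_congr rfl fun k _ => ?_
  by_cases hk : k ∈ T
  · rw [Finset.sum_eq_single_of_mem (cappedWeight b α k)
      (Finset.mem_Icc.2 ⟨hT k hk, cappedWeight_le b α k⟩)]
    · simp [hk, weightClass]
    · intro v _ hv
      simp [weightClass, hv.symm]
  · simp [hk]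

lemma muSum_compl_zero_le (hb : 1 < b) (hα : 0 < α) (hy : 1 < y) (hyα : b < y ^ α) (N : ℕ) :
    muSum b α y⁻¹ {0}ᶜ N ≤ ∑ v ∈ Finset.Ico 1 α, weightProd b y v + topWeightProd b α y := by
  have hweight : ∀ k ∈ ({0}ᶜ : Set ℕ), 1 ≤ cappedWeight b α k := fun k hk =>
    Nat.one_le_iff_ne_zero.2 ((cappedWeight_eq_zero_iff hb hα).not.2 hk)
  have hle : ∀ v, muSum b α y⁻¹ ({0}ᶜ ∩ weightClass b α v) N ≤
      muSum b α y⁻¹ (weightClass b α v) N := fun v =>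
    muSum_mono (by positivity) Set.inter_subset_right N
  calc muSum b α y⁻¹ {0}ᶜ N
      = ∑ v ∈ Finset.Icc 1 α, muSum b α y⁻¹ ({0}ᶜ ∩ weightClass b α v) N := by
        simpa [muSum] using sum_eq_sum_mul_muSum (x := y⁻¹) hweight (fun _ => 1) N
    _ ≤ ∑ v ∈ Finset.Ico 1 α, weightProd b y v + topWeightProd b α y := by
        rw [← Finset.sum_Ico_add_eq_sum_Icc hα]
        refine add_le_add (Finset.sum_le_sum fun v hv => (hle v).trans ?_) ((hle α).trans ?_)
        · exact muSum_weightClass_le hb hy (Finset.mem_Ico.1 hv).2 N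
        · exact muSum_weightClass_top_le hb hα hy hyα N

lemma sum_Eset_pow_cappedWeight_le (hb : 1 < b) (hα : 2 ≤ α) (hy : 1 < y) (hyα : b < y ^ α)
    (N : ℕ) :
    ∑ k ∈ Finset.range (b ^ N), (Eset b).indicator 1 k *
        (y ^ cappedWeight b α k * y⁻¹ ^ mualpha b α k) ≤
      ∑ v ∈ Finset.Ico 2 α, y ^ v * (weightProd b y v / (b - 1)) +
        y ^ α * (weightProd b y (α - 1) / (y ^ α - b)) := by
  rw [sum_eq_sum_mul_muSum (fun k hk => two_le_cappedWeight_of_mem_Eset hb hα hk) (y ^ ·) N,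
    ← Finset.sum_Ico_add_eq_sum_Icc hα]
  gcongr with v hv
  · obtain ⟨hv2, hvα⟩ := Finset.mem_Ico.1 hv
    exact muSum_Eset_inter_weightClass_le hb hy (by lia) hvα N
  · exact muSum_Eset_inter_weightClass_top_le hb (by lia) hy hyα N

end ClassSums

section Constants

variable {b α : ℕ} {lam : ℝ}

lemma pos_of_one_lt_mul_natCast (hlam : 1 < lam * α) : 0 < lam ∧ 0 < α := by
  have hpos : 0 < lam * α := one_pos.trans hlam
  have hlam0 : 0 < lam := pos_of_mul_pos_left hpos α.cast_nonneg
  exact ⟨hlam0, by exact_mod_cast (mul_pos_iff_of_pos_left hlam0).1 hpos⟩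

lemma one_lt_natCast_rpow (hb : 1 < b) (hlam : 1 < lam * α) : 1 < (b : ℝ) ^ lam :=
  Real.one_lt_rpow (mod_cast hb) (pos_of_one_lt_mul_natCast hlam).1

lemma natCast_lt_rpow_pow (hb : 1 < b) (hlam : 1 < lam * α) : b < ((b : ℝ) ^ lam) ^ α := by
  rw [← Real.rpow_mul_natCast b.cast_nonneg]
  exact Real.self_lt_rpow_of_one_lt (mod_cast hb) hlam

lemma mul_weightProd_eq_topWeightProd {y : ℝ} (hα : 0 < α) (hy : y ^ α ≠ 1) :
    (y ^ α - 1) / (y ^ α - b) * weightProd b y α = topWeightProd b α y := by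
  obtain ⟨a, rfl⟩ : ∃ a, α = a + 1 := ⟨α - 1, by lia⟩
  have hne : y ^ (a + 1) - 1 ≠ 0 := sub_ne_zero.2 hy
  rw [weightProd_succ, topWeightProd, Nat.add_sub_cancel]
  field_simp

lemma sum_weightProd_le_A1 (hb : 1 < b) (hlam : 1 < lam * α) :
    ∑ v ∈ Finset.Ico 1 α, weightProd b ((b : ℝ) ^ lam) v + topWeightProd b α ((b : ℝ) ^ lam) ≤
      A1 b α lam := by
  have hb1 : (0 : ℝ) < b - 1 := sub_pos.2 (mod_cast hb)
  have hα := (pos_of_one_lt_mul_natCast hlam).2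
  have hy := one_lt_natCast_rpow hb hlam
  have hyα := natCast_lt_rpow_pow hb hlam
  simp only [A1, Real.rpow_mul_natCast b.cast_nonneg]
  set y := (b : ℝ) ^ lam
  change _ ≤ b / (b - 1) * (∑ v ∈ Finset.Icc 1 (α - 1), weightProd b y v +
    (y ^ α - 1) / (y ^ α - b) * weightProd b y α)
  rw [mul_weightProd_eq_topWeightProd hα (one_lt_pow₀ hy hα.ne').ne',
    Finset.Icc_sub_one_right_eq_Ico_of_not_isMin (by simpa using hα.ne')]
  refine le_mul_of_one_le_left ?_ ((one_le_div hb1).2 (by linarith))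
  exact add_nonneg (Finset.sum_nonneg fun v _ => weightProd_nonneg hb hy v)
    (topWeightProd_nonneg hb hy hyα)

lemma sum_pow_mul_weightProd_eq_A2 (hlam : 1 < lam * α) :
    ∑ v ∈ Finset.Ico 2 α, ((b : ℝ) ^ lam) ^ v * (weightProd b ((b : ℝ) ^ lam) v / (b - 1)) +
        ((b : ℝ) ^ lam) ^ α * (weightProd b ((b : ℝ) ^ lam) (α - 1) / (((b : ℝ) ^ lam) ^ α - b)) =
      A2 b α lam := by
  have hα := (pos_of_one_lt_mul_natCast hlam).2
  simp only [A2, Real.rpow_mul_natCast b.cast_nonneg]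
  set y := (b : ℝ) ^ lam
  have hprod : ∀ v, ∏ i ∈ Finset.Icc 1 v, y * (b - 1) / (y ^ i - 1) = y ^ v * weightProd b y v := by
    intro v
    simp [mul_div_assoc, Finset.prod_mul_distrib, weightProd]
  have hpow : y ^ α = y * y ^ (α - 1) := (mul_pow_sub_one hα.ne' y).symm
  rw [Finset.Icc_sub_one_right_eq_Ico_of_not_isMin (by simpa using hα.ne'), Finset.mul_sum]
  simp only [hprod]
  congr 1
  · exact Finset.sum_congr rfl fun v _ => by ring
  · rw [hpow]
    ring

lemma A1_nonneg (hb : 1 < b) (hlam : 1 < lam * α) : 0 ≤ A1 b α lam :=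
  le_trans (add_nonneg
    (Finset.sum_nonneg fun v _ => weightProd_nonneg hb (one_lt_natCast_rpow hb hlam) v)
    (topWeightProd_nonneg hb (one_lt_natCast_rpow hb hlam) (natCast_lt_rpow_pow hb hlam)))
    (sum_weightProd_le_A1 hb hlam)

lemma A2_nonneg (hb : 1 < b) (hlam : 1 < lam * α) : 0 ≤ A2 b α lam := by
  have hb1 : (0 : ℝ) ≤ b - 1 := sub_nonneg.2 (mod_cast hb.le)
  have hdenom := sub_nonneg.2 (natCast_lt_rpow_pow hb hlam).le
  have hprod := weightProd_nonneg hb (one_lt_natCast_rpow hb hlam)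
  rw [← sum_pow_mul_weightProd_eq_A2 hlam]
  refine add_nonneg (Finset.sum_nonneg fun v _ => ?_) ?_
  · exact mul_nonneg (by positivity) (div_nonneg (hprod v) hb1)
  · exact mul_nonneg (by positivity) (div_nonneg (hprod _) hdenom)

end Constants

section InfiniteSums

open scoped ENNReal

lemma rpow_tsum_le_tsum_rpow {ι : Type*} (f : ι → ℝ≥0∞) {lam : ℝ} (h0 : 0 < lam) (h1 : lam ≤ 1) :
    (∑' i, f i) ^ lam ≤ ∑' i, f i ^ lam := by
  have hfinite : ∀ s : Finset ι, (∑ i ∈ s, f i) ^ lam ≤ ∑ i ∈ s, f i ^ lam := fun s =>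
    Finset.le_sum_of_subadditive (· ^ lam) (ENNReal.zero_rpow_of_pos h0).le
      (fun x y => ENNReal.rpow_add_le_add_rpow x y h0.le h1) s f
  rw [← ENNReal.le_rpow_inv_iff h0, ENNReal.tsum_eq_iSup_sum]
  exact iSup_le fun s =>
    (ENNReal.le_rpow_inv_iff h0).2 ((hfinite s).trans (ENNReal.sum_le_tsum s))

lemma tsum_indicator_comp_le {ι κ : Type*} {s : Set ι} {t : Set κ} {f : ι → κ}
    (hf : Set.InjOn f s) (hst : Set.MapsTo f s t) (g : κ → ℝ≥0∞) :
    ∑' i, s.indicator (g ∘ f) i ≤ ∑' k, t.indicator g k := by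
  rw [← tsum_subtype s, ← tsum_subtype t]
  exact ENNReal.tsum_comp_le_tsum_of_injective (f := hst.restrict f s t)
    (hst.restrict_inj.2 hf) fun k => g k

lemma tsum_indicator_dvd {d : ℕ} (hd : d ≠ 0) (g : ℕ → ℝ≥0∞) :
    ∑' k, {k | d ∣ k}.indicator g k = ∑' l, g (d * l) := by
  have hinj : Function.Injective (d * ·) := mul_right_injective₀ hd
  rw [← hinj.tsum_eq]
  · simp
  · intro k hk
    have hdvd : k ∈ {k | d ∣ k} := Set.mem_of_indicator_ne_zero hk
    obtain ⟨l, rfl⟩ := hdvd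
    exact ⟨l, rfl⟩

lemma tsum_ofReal_le_of_sum_range_pow_le {b : ℕ} (hb : 1 < b) {g : ℕ → ℝ} (hg : ∀ k, 0 ≤ g k)
    {M : ℝ} (h : ∀ N, ∑ k ∈ Finset.range (b ^ N), g k ≤ M) :
    ∑' k, ENNReal.ofReal (g k) ≤ ENNReal.ofReal M := by
  rw [ENNReal.tsum_eq_iSup_nat' (tendsto_pow_atTop_atTop_of_one_lt hb)]
  refine iSup_le fun N => ?_
  rw [← ENNReal.ofReal_sum_of_nonneg fun k _ => hg k]
  exact ENNReal.ofReal_le_ofReal (h N)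

/-- The minimum over `v` is at most the average over `v`. -/
lemma exists_card_mul_rpow_tsum_le {ι V : Type*} [Fintype V] [Nonempty V] (P : V → ι → Prop)
    [∀ v i, Decidable (P v i)] (w : ι → ℝ≥0∞) (K : ℕ)
    (hK : ∀ i, w i ≠ 0 → (Finset.univ.filter fun v => P v i).card ≤ K)
    {lam : ℝ} (h0 : 0 < lam) (h1 : lam ≤ 1) :
    ∃ v, Fintype.card V * (∑' i, if P v i then w i else 0) ^ lam ≤ K * ∑' i, w i ^ lam := by
  obtain ⟨v, hv⟩ := Finite.exists_min fun v => (∑' i, if P v i then w i else 0) ^ lam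
  refine ⟨v, ?_⟩
  calc Fintype.card V * (∑' i, if P v i then w i else 0) ^ lam
      ≤ ∑ v', (∑' i, if P v' i then w i else 0) ^ lam := by
        rw [← nsmul_eq_mul, ← Finset.card_univ]
        exact Finset.card_nsmul_le_sum _ _ _ fun v' _ => hv v'
    _ ≤ ∑ v', ∑' i, if P v' i then w i ^ lam else 0 := by
        refine Finset.sum_le_sum fun v' _ => (rpow_tsum_le_tsum_rpow _ h0 h1).trans_eq ?_
        simp only [apply_ite (· ^ lam), ENNReal.zero_rpow_of_pos h0]
    _ = ∑' i, (Finset.univ.filter fun v => P v i).card * w i ^ lam := by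
        rw [← Summable.tsum_finsetSum fun _ _ => ENNReal.summable]
        simp only [← Finset.sum_filter, Finset.sum_const, nsmul_eq_mul]
    _ ≤ K * ∑' i, w i ^ lam := by
        rw [← ENNReal.tsum_mul_left]
        refine ENNReal.tsum_le_tsum fun i => ?_
        rcases eq_or_ne (w i) 0 with hi | hi
        · simp [hi, ENNReal.zero_rpow_of_pos h0]
        · gcongr
          exact hK i hi

end InfiniteSums

section Weights

open scoped ENNReal

/-- The weight `b ^ (-μ_α(⌊k / b⌋))` of `k ∈ E`, extended by zero to all natural numbers. -/
noncomputable def baseWeight (b α : ℕ) : ℕ → ℝ≥0∞ :=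
  (Eset b).indicator fun k => ENNReal.ofReal ((b : ℝ) ^ mualpha b α (k / b))⁻¹

variable {b α m n : ℕ} {lam : ℝ}

lemma baseWeight_rpow (hlam : 0 < lam) (k : ℕ) :
    baseWeight b α k ^ lam =
      (Eset b).indicator (fun k => ENNReal.ofReal (((b : ℝ) ^ lam)⁻¹ ^ mualpha b α (k / b))) k := by
  by_cases hk : k ∈ Eset b
  · rw [baseWeight, Set.indicator_of_mem hk, Set.indicator_of_mem hk,
      ENNReal.ofReal_rpow_of_nonneg (by positivity) hlam.le, ← inv_pow, ← Real.inv_rpow (by simp),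
      Real.rpow_pow_comm (by simp)]
  · simp [baseWeight, hk, hlam]

lemma tsum_baseWeight_rpow_le (hb : 1 < b) (hlam : 1 < lam * α) :
    ∑' k, baseWeight b α k ^ lam ≤ ENNReal.ofReal (A1 b α lam) := by
  obtain ⟨hlam0, hα⟩ := pos_of_one_lt_mul_natCast hlam
  set y := (b : ℝ) ^ lam
  calc ∑' k, baseWeight b α k ^ lam
      = ∑' k, (Eset b).indicator
          ((fun l => ENNReal.ofReal (y⁻¹ ^ mualpha b α l)) ∘ (· / b)) k :=
        tsum_congr (baseWeight_rpow hlam0)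
    _ ≤ ∑' l, ({0}ᶜ : Set ℕ).indicator (fun l => ENNReal.ofReal (y⁻¹ ^ mualpha b α l)) l :=
        tsum_indicator_comp_le (injOn_div_Eset hb) (fun k hk => div_ne_zero_of_mem_Eset hb hk) _
    _ = ∑' l, ENNReal.ofReal (({0}ᶜ : Set ℕ).indicator 1 l * y⁻¹ ^ mualpha b α l) := by
        refine tsum_congr fun l => ?_
        by_cases hl : l = 0 <;> simp [hl]
    _ ≤ ENNReal.ofReal (A1 b α lam) :=
        (tsum_ofReal_le_of_sum_range_pow_le hb
          (fun l => mul_nonneg (Set.indicator_nonneg (fun _ _ => zero_le_one) _) (by positivity))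
          (muSum_compl_zero_le hb hα (one_lt_natCast_rpow hb hlam)
            (natCast_lt_rpow_pow hb hlam))).trans
          (ENNReal.ofReal_le_ofReal (sum_weightProd_le_A1 hb hlam))

lemma inv_rpow_pow_two_mul_le (hb : 1 < b) (hlam : 1 < lam * α) (hnm : α * m ≤ 2 * n) :
    ((b : ℝ) ^ lam)⁻¹ ^ (2 * n) ≤ ((b : ℝ) ^ m)⁻¹ := by
  have hb1 : (1 : ℝ) < b := mod_cast hb
  have hlam0 := (pos_of_one_lt_mul_natCast hlam).1
  have hnm' : (α * m : ℝ) ≤ 2 * n := mod_cast hnm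
  rw [inv_pow]
  refine inv_anti₀ (by positivity) ?_
  rw [← Real.rpow_mul_natCast b.cast_nonneg, ← Real.rpow_natCast]
  refine Real.rpow_le_rpow_of_exponent_le hb1.le ?_
  push_cast
  calc (m : ℝ) ≤ lam * α * m := le_mul_of_one_le_left m.cast_nonneg hlam.le
    _ = lam * (α * m) := by ring
    _ ≤ lam * (2 * n) := by gcongr

lemma baseWeight_pow_mul_rpow_le (hb : 1 < b) (hα : 2 ≤ α) (hn : 0 < n) (hlam : 1 < lam * α)
    (hnm : α * m ≤ 2 * n) (l : ℕ) :
    baseWeight b α (b ^ n * l) ^ lam ≤ ENNReal.ofReal ((b : ℝ) ^ m)⁻¹ * ENNReal.ofReal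
      ((Eset b).indicator 1 l *
        (((b : ℝ) ^ lam) ^ cappedWeight b α l * ((b : ℝ) ^ lam)⁻¹ ^ mualpha b α l)) := by
  rw [baseWeight_rpow (pos_of_one_lt_mul_natCast hlam).1]
  by_cases hl : l ∈ Eset b
  · have hbase := inv_rpow_pow_two_mul_le hb hlam hnm
    have hy1 := one_lt_natCast_rpow hb hlam
    have hw := two_le_cappedWeight_of_mem_Eset hb hα hl
    set y := (b : ℝ) ^ lam
    set w := cappedWeight b α l
    obtain ⟨r, rfl⟩ : ∃ r, n = r + 1 := ⟨n - 1, by lia⟩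
    have hdiv : b ^ (r + 1) * l / b = b ^ r * l := by
      rw [pow_succ', mul_assoc, Nat.mul_div_cancel_left _ (by lia)]
    rw [Set.indicator_of_mem ((pow_mul_mem_Eset_iff hb _).2 hl), hdiv, mualpha_mul_pow hb,
      Set.indicator_of_mem hl, Pi.one_apply, one_mul, ← ENNReal.ofReal_mul (by positivity)]
    refine ENNReal.ofReal_le_ofReal ?_
    calc y⁻¹ ^ (mualpha b α l + r * w)
        = y⁻¹ ^ ((r + 1) * w) * (y ^ w * y⁻¹ ^ mualpha b α l) := by
          simp only [add_mul, pow_add, one_mul, inv_pow]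
          field_simp
      _ ≤ y⁻¹ ^ (2 * (r + 1)) * (y ^ w * y⁻¹ ^ mualpha b α l) := by
          gcongr ?_ * _
          refine pow_le_pow_of_le_one (by positivity) (inv_le_one_of_one_le₀ hy1.le) ?_
          rw [mul_comm]
          gcongr
      _ ≤ ((b : ℝ) ^ m)⁻¹ * (y ^ w * y⁻¹ ^ mualpha b α l) := by gcongr
  · simp [pow_mul_mem_Eset_iff hb, hl]

lemma tsum_dvd_baseWeight_rpow_le (hb : 1 < b) (hα : 2 ≤ α) (hn : 0 < n) (hlam : 1 < lam * α)
    (hnm : α * m ≤ 2 * n) :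
    ∑' k, {k | b ^ n ∣ k}.indicator (fun k => baseWeight b α k ^ lam) k ≤
      ENNReal.ofReal ((b : ℝ) ^ m)⁻¹ * ENNReal.ofReal (A2 b α lam) := by
  rw [tsum_indicator_dvd (by positivity)]
  refine (ENNReal.tsum_le_tsum (baseWeight_pow_mul_rpow_le hb hα hn hlam hnm)).trans ?_
  rw [ENNReal.tsum_mul_left, ← sum_pow_mul_weightProd_eq_A2 hlam]
  gcongr
  exact tsum_ofReal_le_of_sum_range_pow_le hb
    (fun l => mul_nonneg (Set.indicator_nonneg (fun _ _ => zero_le_one) _) (by positivity))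
    (sum_Eset_pow_cappedWeight_le hb hα (one_lt_natCast_rpow hb hlam)
      (natCast_lt_rpow_pow hb hlam))

end Weights

section Polynomials

open Polynomial

lemma trunc_eq_zero_of_dvd {b n k : ℕ} (h : b ^ n ∣ k) : trunc b n k = 0 := by
  refine Finset.sum_eq_zero fun i hi => ?_
  have hdvd : b ∣ k / b ^ i := by
    rw [Nat.dvd_div_iff_mul_dvd (dvd_trans (pow_dvd_pow b (Finset.mem_range.1 hi).le) h),
      ← pow_succ]
    exact (pow_dvd_pow b (Finset.mem_range.1 hi)).trans h
  rw [digit, Nat.mod_eq_zero_of_dvd hdvd, Nat.cast_zero, C_0, zero_mul]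

lemma pow_dvd_of_digit_eq_zero {b n k : ℕ} (hb : 1 < b) (h : ∀ i < n, digit b k i = 0) :
    b ^ n ∣ k := by
  induction n with
  | zero => simp
  | succ n ih =>
    obtain ⟨l, rfl⟩ := ih fun i hi => h i (by lia)
    have hl : l % b = 0 := by
      simpa only [digit, Nat.mul_div_cancel_left _ (show 0 < b ^ n by positivity)]
        using h n (by lia)
    rw [pow_succ]
    exact Nat.mul_dvd_mul_left _ (Nat.dvd_of_mod_eq_zero hl)

lemma coeff_trunc {b n k i : ℕ} (hi : i < n) : (trunc b n k).coeff i = (digit b k i : ZMod b) := by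
  simp [trunc, coeff_X_pow, hi]

lemma degree_trunc_lt (b n k : ℕ) : (trunc b n k).degree < (n : WithBot ℕ) := by
  rw [← mem_degreeLT]
  refine Submodule.sum_mem _ fun i hi => mem_degreeLT.2 ?_
  exact (degree_C_mul_X_pow_le _ _).trans_lt (mod_cast Finset.mem_range.1 hi)

lemma trunc_eq_zero_iff {b n k : ℕ} (hb : 1 < b) : trunc b n k = 0 ↔ b ^ n ∣ k := by
  refine ⟨fun h => pow_dvd_of_digit_eq_zero hb fun i hi => ?_, trunc_eq_zero_of_dvd⟩
  have hcast : (digit b k i : ZMod b) = 0 := by rw [← coeff_trunc hi, h, coeff_zero]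
  exact Nat.eq_zero_of_dvd_of_lt ((ZMod.natCast_eq_zero_iff _ _).1 hcast)
    (Nat.mod_lt _ (by lia))

variable {F : Type*} [Field F]

/-- The residue of `h` modulo `p` has degree less than `d`. With `d = n - m` this is the congruence
condition that defines the dual polynomial lattice. -/
def HasSmallResidue (d : ℕ) (p h : F[X]) : Prop := (h % p).degree < (d : WithBot ℕ)

lemma hasSmallResidue_zero (d : ℕ) (p : F[X]) : HasSmallResidue d p 0 := by
  simp [HasSmallResidue]

noncomputable instance fintypeDegreeLT [Fintype F] (d : ℕ) : Fintype (degreeLT F d) :=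
  Fintype.ofEquiv _ (degreeLTEquiv F d).symm.toEquiv

lemma card_degreeLT [Fintype F] (d : ℕ) :
    Fintype.card (degreeLT F d) = Fintype.card F ^ d := by
  rw [Fintype.card_congr (degreeLTEquiv F d).toEquiv, Fintype.card_fun, Fintype.card_fin]

lemma injOn_add_mul_mod {p : F[X]} (hp : Irreducible p) (r : F[X]) {t : F[X]} (ht : t ≠ 0)
    (htp : t.degree < p.degree) :
    Set.InjOn (fun q => (r + t * q) % p) {q | q.degree < p.degree} := by
  intro q hq q' hq' h
  have hdvd : p ∣ t * (q - q') := by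
    have hmod : p ∣ (r + t * q) - (r + t * q') := by
      rw [← EuclideanDomain.mod_eq_zero, sub_mod, sub_eq_zero]
      exact h
    rwa [add_sub_add_left_eq_sub, ← mul_sub] at hmod
  have hqq' : (q - q').degree < p.degree := (degree_sub_le q q').trans_lt (max_lt hq hq')
  rcases hp.prime.dvd_or_dvd hdvd with hpt | hpq
  · exact absurd (eq_zero_of_dvd_of_degree_lt hpt htp) ht
  · exact sub_eq_zero.1 (eq_zero_of_dvd_of_degree_lt hpq hqq')

open Classical in
lemma card_hasSmallResidue_le [Fintype F] {p : F[X]} (hp : Irreducible p) {n : ℕ}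
    (hpdeg : p.degree = n) (d : ℕ) (r : F[X]) {t : F[X]} (ht : t ≠ 0) (htn : t.degree < n) :
    (Finset.univ.filter fun q : degreeLT F n => HasSmallResidue d p (r + t * q)).card ≤
      Fintype.card F ^ d := by
  rw [← card_degreeLT, ← Fintype.card_subtype]
  refine Fintype.card_le_of_injective
    (fun q => ⟨(r + t * q.1) % p, mem_degreeLT.2 q.2⟩) fun q q' h => ?_
  have hinj := injOn_add_mul_mod hp r ht (hpdeg ▸ htn)
  rw [hpdeg] at hinj
  exact Subtype.ext <| Subtype.ext <|
    hinj (mem_degreeLT.1 q.1.2) (mem_degreeLT.1 q'.1.2) (congrArg Subtype.val h)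

end Polynomials

section Frequencies

open scoped ENNReal

/-- The index vectors `k ∈ ℕ₀^τ`, encoded as sequences that vanish from position `τ` on so that
they share their ambient type with the vectors in `Bcrit`. -/
abbrev Frequency (τ : ℕ) : Type := {f : ℕ → ℕ // ∀ j, τ ≤ j → f j = 0}

instance : Unique (Frequency 0) where
  default := ⟨0, fun _ _ => rfl⟩
  uniq f := Subtype.ext (funext fun j => f.2 j j.zero_le)

/-- The splitting of an index vector into its last coordinate and the remaining ones. -/
def frequencySuccEquiv (τ : ℕ) : Frequency (τ + 1) ≃ ℕ × Frequency τ where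
  toFun f := (f.1 τ, ⟨Function.update f.1 τ 0, fun j hj => by
    rcases hj.eq_or_lt with rfl | hlt
    · exact Function.update_self ..
    · rw [Function.update_of_ne hlt.ne', f.2 j hlt]⟩)
  invFun x := ⟨Function.update x.2.1 τ x.1, fun j hj => by
    rw [Function.update_of_ne (by lia), x.2.2 j (by lia)]⟩
  left_inv f := by simp
  right_inv x := by
    obtain ⟨k, f, hf⟩ := x
    simp [Function.update_eq_self_iff, hf τ le_rfl]

lemma frequencySuccEquiv_symm_self {τ : ℕ} (x : ℕ × Frequency τ) :
    ((frequencySuccEquiv τ).symm x).1 τ = x.1 :=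
  Function.update_self ..

lemma frequencySuccEquiv_symm_of_mem_range {τ j : ℕ} (hj : j ∈ Finset.range τ)
    (x : ℕ × Frequency τ) : ((frequencySuccEquiv τ).symm x).1 j = x.2.1 j :=
  Function.update_of_ne (Finset.mem_range.1 hj).ne _ _

lemma tsum_frequency_succ {τ : ℕ} (F : Frequency (τ + 1) → ℝ≥0∞) :
    ∑' f, F f = ∑' x : ℕ × Frequency τ, F ((frequencySuccEquiv τ).symm x) :=
  ((frequencySuccEquiv τ).symm.tsum_eq F).symm

lemma tsum_mul_tsum {ι κ : Type*} (F : ι → ℝ≥0∞) (G : κ → ℝ≥0∞) :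
    (∑' i, F i) * ∑' k, G k = ∑' x : ι × κ, F x.1 * G x.2 := by
  simp only [ENNReal.tsum_prod', ENNReal.tsum_mul_left, ENNReal.tsum_mul_right]

lemma tsum_prod_frequency (F : ℕ → ℕ → ℝ≥0∞) (τ : ℕ) :
    ∑' f : Frequency τ, ∏ j ∈ Finset.range τ, F j (f.1 j) =
      ∏ j ∈ Finset.range τ, ∑' k, F j k := by
  induction τ with
  | zero => simp [tsum_fintype]
  | succ τ ih =>
    rw [tsum_frequency_succ, Finset.prod_range_succ, ← ih, mul_comm, tsum_mul_tsum]
    refine tsum_congr fun x => ?_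
    rw [Finset.prod_range_succ, mul_comm, frequencySuccEquiv_symm_self]
    congr 1
    exact Finset.prod_congr rfl fun j hj => by rw [frequencySuccEquiv_symm_of_mem_range hj]

/-- The factor of the weight of an index vector that belongs to a coordinate with value `k`: one
if the coordinate vanishes, and the scaled weight of `k` if `k ∈ E`. -/
noncomputable def coordWeight (b α : ℕ) (c : ℝ≥0∞) (k : ℕ) : ℝ≥0∞ :=
  c * baseWeight b α k + if k = 0 then 1 else 0

/-- The product of the coordinate weights of an index vector. -/
noncomputable def freqWeight (b α : ℕ) (c : ℕ → ℝ≥0∞) (τ : ℕ) (f : ℕ → ℕ) : ℝ≥0∞ :=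
  ∏ j ∈ Finset.range τ, coordWeight b α (c j) (f j)

/-- The scaling `γ_j^{1/2} D^{1/2}` of the `j`-th coordinate. -/
noncomputable def coordScale (γ : ℕ → ℝ) (D : ℝ) (j : ℕ) : ℝ≥0∞ :=
  ENNReal.ofReal (√(γ j) * √D)

variable {b α : ℕ} {lam : ℝ}

lemma baseWeight_zero : baseWeight b α 0 = 0 :=
  Set.indicator_of_notMem (fun h => h.1 rfl) _

lemma coordWeight_rpow (hlam : 0 < lam) (c : ℝ≥0∞) (k : ℕ) :
    coordWeight b α c k ^ lam = c ^ lam * baseWeight b α k ^ lam + if k = 0 then 1 else 0 := by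
  rcases eq_or_ne k 0 with rfl | hk
  · simp [coordWeight, baseWeight_zero, hlam]
  · simp [coordWeight, hk, ENNReal.mul_rpow_of_nonneg _ _ hlam.le]

lemma tsum_coordWeight_rpow_le (hb : 1 < b) (hlam : 1 < lam * α) (c : ℝ≥0∞) :
    ∑' k, coordWeight b α c k ^ lam ≤ 1 + c ^ lam * ENNReal.ofReal (A1 b α lam) := by
  simp only [coordWeight_rpow (pos_of_one_lt_mul_natCast hlam).1]
  rw [ENNReal.tsum_add, ENNReal.tsum_mul_left, tsum_ite_eq, add_comm]
  gcongr
  exact tsum_baseWeight_rpow_le hb hlam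

lemma tsum_freqWeight_rpow_le (hb : 1 < b) (hlam : 1 < lam * α) (c : ℕ → ℝ≥0∞) (τ : ℕ) :
    ∑' f : Frequency τ, freqWeight b α c τ f.1 ^ lam ≤
      ∏ j ∈ Finset.range τ, (1 + c j ^ lam * ENNReal.ofReal (A1 b α lam)) := by
  have hlam0 := (pos_of_one_lt_mul_natCast hlam).1
  simp only [freqWeight, ← ENNReal.prod_rpow_of_nonneg hlam0.le]
  rw [tsum_prod_frequency fun j k => coordWeight b α (c j) k ^ lam]
  exact Finset.prod_le_prod' fun j _ => tsum_coordWeight_rpow_le hb hlam (c j)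

lemma freqWeight_eq_sum_powerset (c : ℕ → ℝ≥0∞) (τ : ℕ) (f : ℕ → ℕ) :
    freqWeight b α c τ f = ∑ u ∈ (Finset.range τ).powerset,
      (∏ j ∈ u, c j * baseWeight b α (f j)) *
        ∏ j ∈ Finset.range τ \ u, if f j = 0 then 1 else 0 :=
  Finset.prod_add ..

lemma freqWeight_frequencySuccEquiv_symm (c : ℕ → ℝ≥0∞) {τ : ℕ} (x : ℕ × Frequency τ) :
    freqWeight b α c (τ + 1) ((frequencySuccEquiv τ).symm x).1 =
      coordWeight b α (c τ) x.1 * freqWeight b α c τ x.2.1 := by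
  rw [freqWeight, Finset.prod_range_succ, mul_comm, frequencySuccEquiv_symm_self]
  congr 1
  exact Finset.prod_congr rfl fun j hj => by rw [frequencySuccEquiv_symm_of_mem_range hj]

lemma toReal_prod_coordScale_mul_baseWeight {γ : ℕ → ℝ} (hγ : ∀ j, 0 ≤ γ j) {D : ℝ}
    {u : Finset ℕ} {f : ℕ → ℕ} (hf : ∀ j ∈ u, f j ∈ Eset b) :
    (∏ j ∈ u, coordScale γ D j * baseWeight b α (f j)).toReal =
      √(∏ j ∈ u, γ j) * √D ^ u.card * ((b : ℝ) ^ ∑ j ∈ u, mualpha b α (f j / b))⁻¹ := by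
  rw [Real.sqrt_prod u fun j _ => hγ j, ← Finset.prod_const, ← Finset.prod_mul_distrib,
    ← Finset.prod_pow_eq_pow_sum, ← Finset.prod_inv_distrib, ← Finset.prod_mul_distrib,
    ENNReal.toReal_prod]
  refine Finset.prod_congr rfl fun j hj => ?_
  rw [coordScale, baseWeight, Set.indicator_of_mem (hf j hj), ENNReal.toReal_mul,
    ENNReal.toReal_ofReal (by positivity), ENNReal.toReal_ofReal (by positivity)]

end Frequencies

section Criterion

open Polynomial
open scoped ENNReal

variable {b : ℕ} [Fact b.Prime]

/-- The combination `tr_n(k_1) q_1 + ⋯ + tr_n(k_τ) q_τ`. -/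
noncomputable def dualForm (n τ : ℕ) (q : ℕ → (ZMod b)[X]) (f : ℕ → ℕ) : (ZMod b)[X] :=
  ∑ j ∈ Finset.range τ, trunc b n (f j) * q j

/-- The vectors `(k_u, 0)` with `k_u ∈ E^{|u|}` in the dual polynomial lattice, with `d = n - m`. -/
def dualFrequencies (d n : ℕ) (p : (ZMod b)[X]) (τ : ℕ) (q : ℕ → (ZMod b)[X]) (u : Finset ℕ) :
    Set (ℕ → ℕ) :=
  {f | (∀ j ∈ u, f j ∈ Eset b) ∧ (∀ j ∉ u, f j = 0) ∧ HasSmallResidue d p (dualForm n τ q f)}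

/-- The contribution of a set `u` of coordinates to the quality criterion, in the extended
nonnegative reals and with `c j` in the role of `γ_j^{1/2} D^{1/2}`. -/
noncomputable def subsetSum (α d n : ℕ) (c : ℕ → ℝ≥0∞) (p : (ZMod b)[X]) (τ : ℕ)
    (q : ℕ → (ZMod b)[X]) (u : Finset ℕ) : ℝ≥0∞ :=
  ∑' f : dualFrequencies d n p τ q u, ∏ j ∈ u, c j * baseWeight b α (f.1 j)

/-- The quality criterion `B_α`, with values in the extended nonnegative reals. -/
noncomputable def extCriterion (α d n : ℕ) (c : ℕ → ℝ≥0∞) (p : (ZMod b)[X]) (τ : ℕ)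
    (q : ℕ → (ZMod b)[X]) : ℝ≥0∞ :=
  ∑ u ∈ (Finset.range τ).powerset.filter (fun u => u.Nonempty), subsetSum α d n c p τ q u

open Classical in
/-- The sum of the weights of all index vectors in the dual polynomial lattice, including zero. -/
noncomputable def dualSum (α d n : ℕ) (c : ℕ → ℝ≥0∞) (p : (ZMod b)[X]) (τ : ℕ)
    (q : ℕ → (ZMod b)[X]) : ℝ≥0∞ :=
  ∑' f : Frequency τ,
    if HasSmallResidue d p (dualForm n τ q f.1) then freqWeight b α c τ f.1 else 0

variable {α d m n τ : ℕ} {c : ℕ → ℝ≥0∞} {p : (ZMod b)[X]} {q : ℕ → (ZMod b)[X]}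

lemma Bcrit_eq_toReal_extCriterion {γ : ℕ → ℝ} (hγ : ∀ j, 0 ≤ γ j) {D : ℝ}
    (hfin : extCriterion α (n - m) n (coordScale γ D) p τ q ≠ ⊤) :
    Bcrit b α m n γ D p τ q = (extCriterion α (n - m) n (coordScale γ D) p τ q).toReal := by
  have hsubset := ENNReal.sum_ne_top.1 hfin
  rw [extCriterion, ENNReal.toReal_sum hsubset]
  refine Finset.sum_congr rfl fun u hu => ?_
  rw [subsetSum, ENNReal.tsum_toReal_eq (ENNReal.ne_top_of_tsum_ne_top (hsubset u hu)),
    ← tsum_mul_left]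
  exact tsum_congr fun f => (toReal_prod_coordScale_mul_baseWeight hγ f.2.1).symm

lemma subsetSum_empty : subsetSum α d n c p τ q ∅ = 1 := by
  have hzero : dualFrequencies d n p τ q ∅ = {0} := by
    ext f
    refine ⟨fun hf => funext fun j => hf.2.1 j (Finset.notMem_empty j), ?_⟩
    rintro rfl
    have hform : dualForm n τ q 0 = 0 := by
      simp [dualForm, trunc_eq_zero_of_dvd (dvd_zero _)]
    exact ⟨by simp, fun _ _ => rfl, hform ▸ hasSmallResidue_zero d p⟩
  rw [subsetSum, hzero]
  simp [tsum_fintype]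

lemma dualFrequencies_subset {u : Finset ℕ} (hu : u ⊆ Finset.range τ) :
    dualFrequencies d n p τ q u ⊆ {f | ∀ j, τ ≤ j → f j = 0} := fun _ hf j hj =>
  hf.2.1 j fun hju => hj.not_gt (Finset.mem_range.1 (hu hju))

lemma subsetSum_eq_tsum_frequency {u : Finset ℕ} (hu : u ⊆ Finset.range τ) :
    subsetSum α d n c p τ q u = ∑' f : Frequency τ,
      (dualFrequencies d n p τ q u).indicator
        (fun f => ∏ j ∈ u, c j * baseWeight b α (f j)) f.1 := by
  rw [subsetSum, tsum_subtype (dualFrequencies d n p τ q u) fun f =>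
    ∏ j ∈ u, c j * baseWeight b α (f j)]
  exact (tsum_subtype_eq_of_support_subset
    (Set.support_indicator_subset.trans (dualFrequencies_subset hu))).symm

lemma indicator_dualFrequencies {f : ℕ → ℕ} (hf : ∀ j, τ ≤ j → f j = 0)
    (hres : HasSmallResidue d p (dualForm n τ q f)) (u : Finset ℕ) :
    (dualFrequencies d n p τ q u).indicator (fun f => ∏ j ∈ u, c j * baseWeight b α (f j)) f =
      (∏ j ∈ u, c j * baseWeight b α (f j)) *
        ∏ j ∈ Finset.range τ \ u, if f j = 0 then 1 else 0 := by
  rw [Finset.prod_ite_zero, Finset.prod_const_one]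
  by_cases hE : ∀ j ∈ u, f j ∈ Eset b
  · have hmem : f ∈ dualFrequencies d n p τ q u ↔ ∀ j ∈ Finset.range τ \ u, f j = 0 := by
      refine ⟨fun h j hj => h.2.1 j (Finset.mem_sdiff.1 hj).2, fun h => ⟨hE, fun j hj => ?_, hres⟩⟩
      rcases lt_or_ge j τ with hjτ | hjτ
      · exact h j (Finset.mem_sdiff.2 ⟨Finset.mem_range.2 hjτ, hj⟩)
      · exact hf j hjτ
    by_cases hzero : ∀ j ∈ Finset.range τ \ u, f j = 0
    · rw [Set.indicator_of_mem (hmem.2 hzero), if_pos hzero, mul_one]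
    · rw [Set.indicator_of_notMem (hmem.not.2 hzero), if_neg hzero, mul_zero]
  · obtain ⟨j, hj, hjE⟩ : ∃ j ∈ u, f j ∉ Eset b := by simpa using hE
    have hprod : ∏ j ∈ u, c j * baseWeight b α (f j) = 0 :=
      Finset.prod_eq_zero hj (by rw [baseWeight, Set.indicator_of_notMem hjE, mul_zero])
    rw [Set.indicator_of_notMem fun h => hE h.1, hprod, zero_mul]

lemma dualSum_eq_sum_subsetSum :
    dualSum α d n c p τ q = ∑ u ∈ (Finset.range τ).powerset, subsetSum α d n c p τ q u := by
  rw [Finset.sum_congr rfl fun u hu => subsetSum_eq_tsum_frequency (Finset.mem_powerset.1 hu),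
    ← Summable.tsum_finsetSum fun _ _ => ENNReal.summable]
  refine tsum_congr fun f => ?_
  split_ifs with hres
  · rw [freqWeight_eq_sum_powerset]
    exact Finset.sum_congr rfl fun u _ => (indicator_dualFrequencies f.2 hres u).symm
  · exact (Finset.sum_eq_zero fun u _ => Set.indicator_of_notMem (fun h => hres h.2.2) _).symm

lemma dualSum_eq_one_add_extCriterion :
    dualSum α d n c p τ q = 1 + extCriterion α d n c p τ q := by
  have hempty : (Finset.range τ).powerset.filter (fun u => ¬u.Nonempty) = {∅} := by
    ext u
    simp +contextual [Finset.not_nonempty_iff_eq_empty]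
  rw [dualSum_eq_sum_subsetSum,
    ← Finset.sum_filter_not_add_sum_filter _ (fun u : Finset ℕ => u.Nonempty), hempty,
    Finset.sum_singleton, subsetSum_empty, extCriterion]

end Criterion

section ComponentByComponent

open Polynomial
open scoped ENNReal

/-- The total weight of the `k ∈ E` whose truncated polynomial vanishes. They pair to zero with
every choice of the generating polynomial. -/
noncomputable def truncZeroSum (b α n : ℕ) : ℝ≥0∞ :=
  ∑' k, {k | b ^ n ∣ k}.indicator (baseWeight b α) k

open Classical in
/-- The part of the dual sum in `τ + 1` coordinates that depends on the last generating polynomial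
`q'`: the last entry of the index vector has nonzero truncated polynomial. -/
noncomputable def lastGeneratorSum {b : ℕ} [Fact b.Prime] (α d n : ℕ) (c : ℕ → ℝ≥0∞)
    (p : (ZMod b)[X]) (τ : ℕ) (q : ℕ → (ZMod b)[X]) (q' : (ZMod b)[X]) : ℝ≥0∞ :=
  ∑' x : ℕ × Frequency τ,
    if HasSmallResidue d p (dualForm n τ q x.2.1 + trunc b n x.1 * q') then
      c τ * {k | b ^ n ∣ k}ᶜ.indicator (baseWeight b α) x.1 * freqWeight b α c τ x.2.1
    else 0

variable {b α d m n τ : ℕ} {c : ℕ → ℝ≥0∞} {lam : ℝ}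

lemma one_add_mul_truncZeroSum (b α n : ℕ) (a : ℝ≥0∞) :
    1 + a * truncZeroSum b α n = ∑' k, {k | b ^ n ∣ k}.indicator (coordWeight b α a) k := by
  have hterm (k : ℕ) : {k | b ^ n ∣ k}.indicator (coordWeight b α a) k =
      (if k = 0 then 1 else 0) + a * {k | b ^ n ∣ k}.indicator (baseWeight b α) k := by
    by_cases hk : b ^ n ∣ k
    · simp [coordWeight, hk, add_comm]
    · have hk0 : k ≠ 0 := by rintro rfl; exact hk (dvd_zero _)
      simp [hk, hk0]
  simp only [hterm]
  rw [ENNReal.tsum_add, tsum_ite_eq, ENNReal.tsum_mul_left, truncZeroSum]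

lemma coordWeight_of_not_dvd {k : ℕ} (hk : ¬b ^ n ∣ k) (a : ℝ≥0∞) :
    coordWeight b α a k = a * baseWeight b α k := by
  have hk0 : k ≠ 0 := by rintro rfl; exact hk (dvd_zero _)
  rw [coordWeight, if_neg hk0, add_zero]

lemma truncZeroSum_rpow_le (hb : 1 < b) (hα : 2 ≤ α) (hn : 0 < n) (hlam : 1 < lam * α)
    (hlam1 : lam ≤ 1) (hnm : α * m ≤ 2 * n) :
    truncZeroSum b α n ^ lam ≤ ENNReal.ofReal ((b : ℝ) ^ m)⁻¹ * ENNReal.ofReal (A2 b α lam) := by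
  have hlam0 := (pos_of_one_lt_mul_natCast hlam).1
  calc truncZeroSum b α n ^ lam
      ≤ ∑' k, {k | b ^ n ∣ k}.indicator (baseWeight b α) k ^ lam :=
        rpow_tsum_le_tsum_rpow _ hlam0 hlam1
    _ = ∑' k, {k | b ^ n ∣ k}.indicator (fun k => baseWeight b α k ^ lam) k :=
        tsum_congr fun k => (congrFun (Set.indicator_comp_of_zero (g := (· ^ lam))
          (ENNReal.zero_rpow_of_pos hlam0)) k).symm
    _ ≤ _ := tsum_dvd_baseWeight_rpow_le hb hα hn hlam hnm

lemma tsum_lastGeneratorSum_weight_rpow_le (hb : 1 < b) (hlam : 1 < lam * α) :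
    ∑' x : ℕ × Frequency τ,
        (c τ * {k | b ^ n ∣ k}ᶜ.indicator (baseWeight b α) x.1 * freqWeight b α c τ x.2.1) ^ lam ≤
      c τ ^ lam * ENNReal.ofReal (A1 b α lam) *
        ∏ j ∈ Finset.range τ, (1 + c j ^ lam * ENNReal.ofReal (A1 b α lam)) := by
  have hlam0 := (pos_of_one_lt_mul_natCast hlam).1
  simp only [ENNReal.mul_rpow_of_nonneg _ _ hlam0.le]
  rw [← tsum_mul_tsum (fun k => c τ ^ lam * {k | b ^ n ∣ k}ᶜ.indicator (baseWeight b α) k ^ lam)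
    fun f : Frequency τ => freqWeight b α c τ f.1 ^ lam, ENNReal.tsum_mul_left]
  gcongr
  · exact (ENNReal.tsum_le_tsum fun k => ENNReal.rpow_le_rpow
      (Set.indicator_le_self _ _ k) hlam0.le).trans (tsum_baseWeight_rpow_le hb hlam)
  · exact tsum_freqWeight_rpow_le hb hlam c τ

lemma le_ofReal_inv_pow_mul (hb : b ≠ 0) (hmn : m ≤ n) {x z : ℝ≥0∞}
    (h : (b : ℝ≥0∞) ^ n * x ≤ (b : ℝ≥0∞) ^ (n - m) * z) :
    x ≤ ENNReal.ofReal ((b : ℝ) ^ m)⁻¹ * z := by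
  have hpow0 (i : ℕ) : (b : ℝ≥0∞) ^ i ≠ 0 := pow_ne_zero i (mod_cast hb)
  have hpowtop (i : ℕ) : (b : ℝ≥0∞) ^ i ≠ ⊤ := ENNReal.pow_ne_top (ENNReal.natCast_ne_top b)
  have hreal : ENNReal.ofReal ((b : ℝ) ^ m)⁻¹ = ((b : ℝ≥0∞) ^ m)⁻¹ := by
    rw [ENNReal.ofReal_inv_of_pos (by positivity), ENNReal.ofReal_pow (by positivity),
      ENNReal.ofReal_natCast]
  rw [← Nat.sub_add_cancel hmn, pow_add, Nat.add_sub_cancel, mul_assoc,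
    ENNReal.mul_le_mul_iff_right (hpow0 _) (hpowtop _)] at h
  rwa [hreal, ← ENNReal.div_eq_inv_mul, ENNReal.le_div_iff_mul_le (Or.inl (hpow0 m))
    (Or.inl (hpowtop m)), mul_comm]

variable [Fact b.Prime] {p : (ZMod b)[X]} {q : ℕ → (ZMod b)[X]}

lemma dualForm_update_succ (q : ℕ → (ZMod b)[X]) (q' : (ZMod b)[X]) (x : ℕ × Frequency τ) :
    dualForm n (τ + 1) (Function.update q τ q') ((frequencySuccEquiv τ).symm x).1 =
      dualForm n τ q x.2.1 + trunc b n x.1 * q' := by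
  rw [dualForm, Finset.sum_range_succ, frequencySuccEquiv_symm_self, Function.update_self]
  congr 1
  refine Finset.sum_congr rfl fun j hj => ?_
  rw [frequencySuccEquiv_symm_of_mem_range hj,
    Function.update_of_ne (Finset.mem_range.1 hj).ne]

lemma dualSum_update_succ (q' : (ZMod b)[X]) :
    dualSum α d n c p (τ + 1) (Function.update q τ q') =
      (1 + c τ * truncZeroSum b α n) * dualSum α d n c p τ q +
        lastGeneratorSum α d n c p τ q q' := by
  rw [one_add_mul_truncZeroSum, dualSum, dualSum, lastGeneratorSum, tsum_frequency_succ,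
    tsum_mul_tsum, ← ENNReal.tsum_add]
  refine tsum_congr fun x => ?_
  rw [dualForm_update_succ, freqWeight_frequencySuccEquiv_symm]
  by_cases hk : b ^ n ∣ x.1
  · rw [trunc_eq_zero_of_dvd hk, zero_mul, add_zero]
    simp [hk]
  · simp [hk, coordWeight_of_not_dvd hk]

lemma dualSum_rpow_le (hlam : 1 < lam * α) (hlam1 : lam ≤ 1) :
    dualSum α d n c p τ q ^ lam ≤
      ∏ j ∈ Finset.range τ, (1 + c j ^ lam * ENNReal.ofReal (A1 b α lam)) := by
  have hlam0 := (pos_of_one_lt_mul_natCast hlam).1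
  refine (rpow_tsum_le_tsum_rpow _ hlam0 hlam1).trans
    ((ENNReal.tsum_le_tsum fun f => ?_).trans
      (tsum_freqWeight_rpow_le (Fact.out : b.Prime).one_lt hlam c τ))
  split_ifs
  · exact le_rfl
  · simp [hlam0]

lemma extCriterion_ne_top (hα : 2 ≤ α) (hc : ∀ j, c j ≠ ⊤) :
    extCriterion α d n c p τ q ≠ ⊤ := by
  have hone : (1 : ℝ) < 1 * α := by rw [one_mul]; exact_mod_cast hα
  have hle : dualSum α d n c p τ q ≤
      ∏ j ∈ Finset.range τ, (1 + c j * ENNReal.ofReal (A1 b α 1)) := by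
    simpa only [ENNReal.rpow_one] using dualSum_rpow_le (p := p) (q := q) (c := c) hone le_rfl
  rw [dualSum_eq_one_add_extCriterion] at hle
  refine ne_top_of_le_ne_top (ENNReal.prod_ne_top fun j _ => ?_) (le_add_self.trans hle)
  exact ENNReal.add_ne_top.2
    ⟨ENNReal.one_ne_top, ENNReal.mul_ne_top (hc j) ENNReal.ofReal_ne_top⟩

lemma exists_lastGeneratorSum_rpow_le (hp : Irreducible p) (hpdeg : p.degree = n) (hmn : m ≤ n)
    (hlam : 1 < lam * α) (hlam1 : lam ≤ 1) (q : ℕ → (ZMod b)[X]) :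
    ∃ q' : (ZMod b)[X], q'.degree < n ∧
      lastGeneratorSum α (n - m) n c p τ q q' ^ lam ≤ ENNReal.ofReal ((b : ℝ) ^ m)⁻¹ *
        (c τ ^ lam * ENNReal.ofReal (A1 b α lam) *
          ∏ j ∈ Finset.range τ, (1 + c j ^ lam * ENNReal.ofReal (A1 b α lam))) := by
  classical
  have hb : 1 < b := (Fact.out : b.Prime).one_lt
  obtain ⟨q', hq'⟩ := exists_card_mul_rpow_tsum_le
    (fun (q' : degreeLT (ZMod b) n) (x : ℕ × Frequency τ) =>
      HasSmallResidue (n - m) p (dualForm n τ q x.2.1 + trunc b n x.1 * q'))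
    (fun x => c τ * {k | b ^ n ∣ k}ᶜ.indicator (baseWeight b α) x.1 * freqWeight b α c τ x.2.1)
    (b ^ (n - m))
    (fun x hx => by
      have hk : ¬b ^ n ∣ x.1 :=
        Set.mem_of_indicator_ne_zero (right_ne_zero_of_mul (left_ne_zero_of_mul hx))
      simpa only [ZMod.card] using card_hasSmallResidue_le hp hpdeg (n - m) _
        ((trunc_eq_zero_iff hb).not.2 hk) (degree_trunc_lt b n x.1))
    (pos_of_one_lt_mul_natCast hlam).1 hlam1
  refine ⟨q', mem_degreeLT.1 q'.2, ?_⟩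
  refine le_ofReal_inv_pow_mul (by lia) hmn ?_
  simpa only [lastGeneratorSum, card_degreeLT, ZMod.card, Nat.cast_pow] using
    hq'.trans (mul_le_mul_right (tsum_lastGeneratorSum_weight_rpow_le hb hlam) _)

lemma extCriterion_update_succ_rpow_le (hα : 2 ≤ α) (hn : 0 < n) (hlam : 1 < lam * α)
    (hlam1 : lam ≤ 1) (hnm : α * m ≤ 2 * n) (q' : (ZMod b)[X]) :
    extCriterion α d n c p (τ + 1) (Function.update q τ q') ^ lam ≤
      extCriterion α d n c p τ q ^ lam +
        ENNReal.ofReal ((b : ℝ) ^ m)⁻¹ * (c τ ^ lam * ENNReal.ofReal (A2 b α lam) *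
          ∏ j ∈ Finset.range τ, (1 + c j ^ lam * ENNReal.ofReal (A1 b α lam))) +
        lastGeneratorSum α d n c p τ q q' ^ lam := by
  have hlam0 := (pos_of_one_lt_mul_natCast hlam).1
  have hsub (x y : ℝ≥0∞) : (x + y) ^ lam ≤ x ^ lam + y ^ lam :=
    ENNReal.rpow_add_le_add_rpow x y hlam0.le hlam1
  have hsplit : extCriterion α d n c p (τ + 1) (Function.update q τ q') =
      extCriterion α d n c p τ q + c τ * truncZeroSum b α n * dualSum α d n c p τ q +
        lastGeneratorSum α d n c p τ q q' := by
    rw [← ENNReal.add_right_inj ENNReal.one_ne_top, ← dualSum_eq_one_add_extCriterion,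
      dualSum_update_succ, add_mul, one_mul]
    nth_rw 1 [dualSum_eq_one_add_extCriterion]
    simp only [add_assoc]
  rw [hsplit]
  refine (hsub _ _).trans ?_
  gcongr
  refine (hsub _ _).trans ?_
  gcongr
  calc (c τ * truncZeroSum b α n * dualSum α d n c p τ q) ^ lam
      = c τ ^ lam * truncZeroSum b α n ^ lam * dualSum α d n c p τ q ^ lam := by
        simp only [ENNReal.mul_rpow_of_nonneg _ _ hlam0.le]
    _ ≤ c τ ^ lam * (ENNReal.ofReal ((b : ℝ) ^ m)⁻¹ * ENNReal.ofReal (A2 b α lam)) *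
          ∏ j ∈ Finset.range τ, (1 + c j ^ lam * ENNReal.ofReal (A1 b α lam)) := by
        gcongr
        · exact truncZeroSum_rpow_le (Fact.out : b.Prime).one_lt hα hn hlam hlam1 hnm
        · exact dualSum_rpow_le hlam hlam1
    _ = _ := by ring

lemma inv_pow_add_extCriterion_rpow_le {s : ℕ} (hα : 2 ≤ α) (hn : 0 < n) (hnm : α * m ≤ 2 * n)
    (hp : Irreducible p) (hpdeg : p.degree = n) (hlam : 1 < lam * α) (hlam1 : lam ≤ 1)
    (hmin : ∀ τ < s, ∀ q' : (ZMod b)[X], q'.degree < n →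
      extCriterion α (n - m) n c p (τ + 1) q ≤
        extCriterion α (n - m) n c p (τ + 1) (Function.update q τ q')) :
    ENNReal.ofReal ((b : ℝ) ^ m)⁻¹ + extCriterion α (n - m) n c p s q ^ lam ≤
      ENNReal.ofReal ((b : ℝ) ^ m)⁻¹ * ∏ j ∈ Finset.range s,
        (1 + c j ^ lam * (ENNReal.ofReal (A1 b α lam) + ENNReal.ofReal (A2 b α lam))) := by
  have hlam0 := (pos_of_one_lt_mul_natCast hlam).1
  have hmn : m ≤ n := by nlinarith
  set β := ENNReal.ofReal ((b : ℝ) ^ m)⁻¹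
  set a₁ := ENNReal.ofReal (A1 b α lam)
  set a₂ := ENNReal.ofReal (A2 b α lam)
  induction s with
  | zero => simp [extCriterion, Finset.filter_singleton, hlam0]
  | succ τ ih =>
    obtain ⟨q', hq'deg, hq'⟩ :=
      exists_lastGeneratorSum_rpow_le (c := c) (τ := τ) hp hpdeg hmn hlam hlam1 q
    set N := ∏ j ∈ Finset.range τ, (1 + c j ^ lam * a₁)
    set M := ∏ j ∈ Finset.range τ, (1 + c j ^ lam * (a₁ + a₂)) with hM
    have hNM : N ≤ M := Finset.prod_le_prod' fun j _ => by gcongr; exact le_self_add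
    calc β + extCriterion α (n - m) n c p (τ + 1) q ^ lam
        ≤ β + (extCriterion α (n - m) n c p τ q ^ lam + β * (c τ ^ lam * a₂ * N) +
            β * (c τ ^ lam * a₁ * N)) := by
          gcongr
          refine (ENNReal.rpow_le_rpow (hmin τ τ.lt_succ_self q' hq'deg) hlam0.le).trans ?_
          refine (extCriterion_update_succ_rpow_le hα hn hlam hlam1 hnm q').trans ?_
          gcongr
      _ = β + extCriterion α (n - m) n c p τ q ^ lam + β * (c τ ^ lam * (a₁ + a₂)) * N := by ring
      _ ≤ β * M + β * (c τ ^ lam * (a₁ + a₂)) * M := by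
          gcongr
          exact ih fun τ' hτ' => hmin τ' (hτ'.trans τ.lt_succ_self)
      _ = β * ∏ j ∈ Finset.range (τ + 1), (1 + c j ^ lam * (a₁ + a₂)) := by
          rw [Finset.prod_range_succ, ← hM]
          ring

end ComponentByComponent

section RealBound

open scoped ENNReal

variable {lam : ℝ}

lemma coordScale_rpow (hlam : 0 ≤ lam) {γ : ℕ → ℝ} (hγ : ∀ j, 0 ≤ γ j) {D : ℝ} (hD : 0 ≤ D)
    (j : ℕ) : coordScale γ D j ^ lam = ENNReal.ofReal (γ j ^ (lam / 2) * D ^ (lam / 2)) := by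
  rw [coordScale, ENNReal.ofReal_rpow_of_nonneg (by positivity) hlam,
    Real.mul_rpow (by positivity) (by positivity), Real.sqrt_eq_rpow, Real.sqrt_eq_rpow,
    ← Real.rpow_mul (hγ j), ← Real.rpow_mul hD, one_div_mul_eq_div]

lemma prod_one_add_coordScale_rpow (hlam : 0 ≤ lam) {γ : ℕ → ℝ} (hγ : ∀ j, 0 ≤ γ j) {D : ℝ}
    (hD : 0 ≤ D) {a : ℝ} (ha : 0 ≤ a) (s : Finset ℕ) :
    ∏ j ∈ s, (1 + coordScale γ D j ^ lam * ENNReal.ofReal a) =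
      ENNReal.ofReal (∏ j ∈ s, (1 + γ j ^ (lam / 2) * D ^ (lam / 2) * a)) := by
  have hterm (j : ℕ) : 0 ≤ γ j ^ (lam / 2) * D ^ (lam / 2) := by have := hγ j; positivity
  rw [ENNReal.ofReal_prod_of_nonneg fun j _ => by have := hterm j; positivity]
  refine Finset.prod_congr rfl fun j _ => ?_
  rw [coordScale_rpow hlam hγ hD, ← ENNReal.ofReal_mul (hterm j),
    ENNReal.ofReal_add zero_le_one (mul_nonneg (hterm j) ha), ENNReal.ofReal_one]

lemma toReal_le_of_inv_pow_add_rpow_le {b m : ℕ} (hb : 1 < b) (hlam : 0 < lam) {x : ℝ≥0∞} {P : ℝ}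
    (h : ENNReal.ofReal ((b : ℝ) ^ m)⁻¹ + x ^ lam ≤
      ENNReal.ofReal ((b : ℝ) ^ m)⁻¹ * ENNReal.ofReal P) :
    x.toReal ≤ (b : ℝ) ^ (-((m : ℝ) / lam)) * (-1 + P) ^ (1 / lam) := by
  have hb0 : (0 : ℝ) < b := mod_cast (by lia : 0 < b)
  have hscale : (b : ℝ) ^ (-((m : ℝ) / lam)) = ((b : ℝ) ^ m)⁻¹ ^ (1 / lam) := by
    rw [← Real.rpow_natCast, ← Real.rpow_neg hb0.le, ← Real.rpow_mul hb0.le, mul_one_div, neg_div]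
  have hβ : 0 < ((b : ℝ) ^ m)⁻¹ := by positivity
  rw [hscale]
  set β := ((b : ℝ) ^ m)⁻¹
  rw [← ENNReal.ofReal_mul hβ.le] at h
  have hP : 0 ≤ -1 + P := by
    rcases ENNReal.ofReal_le_ofReal_iff'.1 (le_self_add.trans h) with hle | hle
    · linarith [(le_mul_iff_one_le_right hβ).1 hle]
    · exact absurd hle hβ.not_ge
  have hx : x ^ lam ≤ ENNReal.ofReal (β * (-1 + P)) := by
    refine (ENNReal.le_sub_of_add_le_left ENNReal.ofReal_ne_top h).trans_eq ?_
    rw [← ENNReal.ofReal_sub _ hβ.le]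
    congr 1
    ring
  rw [← Real.mul_rpow hβ.le hP]
  refine ENNReal.toReal_le_of_le_ofReal (by positivity) ?_
  rwa [← ENNReal.ofReal_rpow_of_nonneg (by positivity) (by positivity), one_div,
    ENNReal.le_rpow_inv_iff hlam]

end RealBound

/-- When `n ≥ αm/2`, the component-by-component construction of folded higher order
polynomial lattice rules achieves, for every `1/α < λ ≤ 1`, the optimal-order bound
`B_α(q, p) ≤ b^{-m/λ} [-1 + ∏_{j=1}^s (1 + γ_j^{λ/2} D^{λ/2} A_{α,b,λ})]^{1/λ}`. -/
theorem cbc_bound_optimal (b α m n s : ℕ) [Fact b.Prime] (hα : 2 ≤ α) (hm : 0 < m)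
    (hn : 0 < n) (hnm : (α * m : ℝ) / 2 ≤ (n : ℝ))
    (hs : 0 < s) (p : Polynomial (ZMod b)) (hp : Irreducible p)
    (hpdeg : p.degree = (n : WithBot ℕ))
    (γ : ℕ → ℝ) (hγ : ∀ j, 0 ≤ γ j) (D : ℝ) (hD : 0 < D)
    (q : ℕ → Polynomial (ZMod b))
    (hq : ∀ τ, 1 ≤ τ → τ ≤ s → (q (τ - 1)).degree < (n : WithBot ℕ) ∧
      ∀ q' : Polynomial (ZMod b), q'.degree < (n : WithBot ℕ) →
        Bcrit b α m n γ D p τ q ≤ Bcrit b α m n γ D p τ (Function.update q (τ - 1) q')) :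
    ∀ lam : ℝ, 1 / (α : ℝ) < lam → lam ≤ 1 →
      Bcrit b α m n γ D p s q ≤
        (b : ℝ) ^ (-((m : ℝ) / lam)) *
          (-1 + ∏ j ∈ Finset.range s,
            (1 + γ j ^ (lam / 2) * D ^ (lam / 2) * (A1 b α lam + A2 b α lam))) ^ (1 / lam) := by
  intro lam hlam hlam1
  have hb : 1 < b := (Fact.out : b.Prime).one_lt
  have hlamα : 1 < lam * α := (div_lt_iff₀ (by positivity)).1 hlam
  have hlam0 : 0 < lam := (pos_of_one_lt_mul_natCast hlamα).1
  have hnm' : α * m ≤ 2 * n := by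
    have : (α * m : ℝ) ≤ 2 * n := by linarith
    exact_mod_cast this
  have hfin (τ : ℕ) (q : ℕ → Polynomial (ZMod b)) :
      extCriterion α (n - m) n (coordScale γ D) p τ q ≠ ⊤ :=
    extCriterion_ne_top hα fun _ => ENNReal.ofReal_ne_top
  have hmin : ∀ τ < s, ∀ q' : Polynomial (ZMod b), q'.degree < n →
      extCriterion α (n - m) n (coordScale γ D) p (τ + 1) q ≤
        extCriterion α (n - m) n (coordScale γ D) p (τ + 1) (Function.update q τ q') := by
    intro τ hτ q' hq'
    rw [← ENNReal.toReal_le_toReal (hfin _ _) (hfin _ _),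
      ← Bcrit_eq_toReal_extCriterion hγ (hfin _ _), ← Bcrit_eq_toReal_extCriterion hγ (hfin _ _)]
    exact (hq (τ + 1) (by lia) hτ).2 q' hq'
  have hA1 := A1_nonneg hb hlamα
  have hA2 := A2_nonneg hb hlamα
  have hbound := inv_pow_add_extCriterion_rpow_le hα hn hnm' hp hpdeg hlamα hlam1 hmin
  rw [← ENNReal.ofReal_add hA1 hA2,
    prod_one_add_coordScale_rpow hlam0.le hγ hD.le (add_nonneg hA1 hA2)] at hbound
  rw [Bcrit_eq_toReal_extCriterion hγ (hfin _ _)]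
  exact toReal_le_of_inv_pow_add_rpow_le hb hlam0 hbound

end QMC
end
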